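/- arXiv:math/0203237 — 8 statements merged into one kernel-verified Lean document; each statement's English description precedes it below -/
import Mathlib

section
/- Let U be an open subset of a separable infinite-dimensional real Hilbert space X. For every continuous mapping f : U → ℝ^m and every continuous positive function ε : U → (0,∞), there exists a C^∞ smooth mapping ψ : U → ℝ^m such that ‖f(x) − ψ(x)‖ ≤ ε(x) for all x ∈ U and the Fréchet derivative dψ(x) : X → ℝ^m is surjective for every x ∈ U (that is, ψ has no critical points). -/
/-!
On a separable infinite-dimensional Hilbert space there is a bounded smooth `θ` such that
`‖x‖ ^ 2 + θ x` has no critical point: up to isometry the space is `L²(-1, 1)`, and one can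
interpolate between `⟪A x, x⟫ - 2 ⟪b, x⟫` near the origin and `‖x‖ ^ 2` far away, where `A` is
multiplication by `t` and `b = 1 - t ^ 2`. A critical point would solve `A x + κ x = b`, and such
solutions only exist for `|κ| ≥ 1`, where they are bounded; but near the origin `κ = 0`.

Fix mutually orthogonal infinite-dimensional blocks `K n` and an operator `ℓ` onto the target that
vanishes on all of them. The approximation is an average `∑ W q • (c q + δ q • ℓ)`, where the
weights `W q` form a locally finite smooth partition of unity, built in stages from squared
distances to the centres of balls. Adding to the distances of stage `n` small perturbations of the
above kind along `K n` and `K (n + 1)`, any direction orthogonal to the relevant centres and to all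
blocks can be corrected inside a single block so that all weights become stationary along it. Since
`ℓ` ignores the correction, the derivative of the average takes every value.
-/

open Metric Set

open Filter Function MeasureTheory Module
open scoped ContDiff InnerProductSpace Topology

section MultiplicationOperator

/-- Lebesgue measure on the interval `(-1, 1)`. -/
noncomputable abbrev intervalMeasure : Measure ℝ := volume.restrict (Ioo (-1) 1)

theorem exists_isSymmetric_ae_eq_mul {α : Type*} [MeasurableSpace α] {μ : Measure α}
    {φ : α → ℝ} (hφ : MemLp φ ⊤ μ) :
    ∃ A : Lp ℝ 2 μ →L[ℝ] Lp ℝ 2 μ, A.IsSymmetric ∧ ∀ z, A z =ᵐ[μ] fun t => φ t * z t := by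
  let A := (ContinuousLinearMap.mul ℝ ℝ).holderL μ ⊤ 2 2 (hφ.toLp φ)
  have hA : ∀ z, A z =ᵐ[μ] fun t => φ t * z t := fun z => by
    filter_upwards [(ContinuousLinearMap.mul ℝ ℝ).coeFn_holder (r := 2) (hφ.toLp φ) z,
      hφ.coeFn_toLp] with t ht hφt
    rw [← hφt]
    exact ht
  refine ⟨A, fun z w => ?_, hA⟩
  rw [L2.inner_def, L2.inner_def]
  refine integral_congr_ae ?_
  filter_upwards [hA z, hA w] with t hz hw
  simp only [ContinuousLinearMap.coe_coe, hz, hw, RCLike.inner_apply, conj_trivial]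
  ring

theorem not_integrableOn_inv_add {κ : ℝ} (hκ : |κ| < 1) :
    ¬ IntegrableOn (fun t : ℝ => (t + κ)⁻¹) (Ioo (-1) 1) := by
  have hκ' : -κ ∈ uIcc (-1 : ℝ) 1 := by
    rw [uIcc_of_le (by norm_num)]
    exact ⟨by linarith [abs_lt.1 hκ], by linarith [abs_lt.1 hκ]⟩
  have h := intervalIntegrable_sub_inv_iff (a := -1) (b := 1) (c := -κ)
  simp only [sub_neg_eq_add] at h
  rw [← intervalIntegrable_iff_integrableOn_Ioo_of_le (by norm_num), h, not_or, not_not]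
  exact ⟨by norm_num, hκ'⟩

theorem ae_add_ne_zero (κ : ℝ) : ∀ᵐ t ∂intervalMeasure, t + κ ≠ 0 := by
  filter_upwards [(volume.restrict (Ioo (-1 : ℝ) 1)).ae_ne (-κ)] with t ht h
  exact ht (by linarith)

theorem one_le_abs_of_integrable_of_add_mul_eq {κ : ℝ} {z : ℝ → ℝ}
    (hz : Integrable z intervalMeasure)
    (h : ∀ᵐ t ∂intervalMeasure, (t + κ) * z t = 1 - t ^ 2) : 1 ≤ |κ| := by
  by_contra! hκ
  have hpos : 0 < 1 - κ ^ 2 := by nlinarith [sq_abs κ, abs_nonneg κ]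
  have hlin : IntegrableOn (fun t : ℝ => t - κ) (Ioo (-1) 1) :=
    (by fun_prop : Continuous fun t : ℝ => t - κ).integrableOn_Icc.mono_set Ioo_subset_Icc_self
  refine not_integrableOn_inv_add hκ (((hz.add hlin).div_const (1 - κ ^ 2)).congr ?_)
  filter_upwards [h, ae_add_ne_zero κ] with t ht ht0
  rw [Pi.add_apply, eq_comm, inv_eq_one_div, div_eq_div_iff ht0 hpos.ne']
  linear_combination -ht

theorem ae_abs_le_two_of_add_mul_eq {κ : ℝ} (hκ : 1 ≤ |κ|) {z : ℝ → ℝ}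
    (h : ∀ᵐ t ∂intervalMeasure, (t + κ) * z t = 1 - t ^ 2) :
    ∀ᵐ t ∂intervalMeasure, |z t| ≤ 2 := by
  filter_upwards [h, ae_restrict_mem measurableSet_Ioo] with t ht htI
  have ht1 : |t| < 1 := abs_lt.2 htI
  have hle : 1 - |t| ≤ |t + κ| := by
    have := abs_sub_abs_le_abs_sub κ (-t)
    rw [abs_neg, sub_neg_eq_add, add_comm κ] at this
    linarith
  have hmul : |t + κ| * |z t| = (1 - |t|) * (1 + |t|) := by
    rw [← abs_mul, ht, abs_of_nonneg (by nlinarith [sq_abs t, abs_nonneg t])]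
    linear_combination sq_abs t
  nlinarith [abs_nonneg (z t)]

/- Multiplication by `t` has spectrum `[-1, 1]`, filled by points at which `1 - t ^ 2` is not in the
range; since `1 - t ^ 2` vanishes at both endpoints, the solutions outside stay bounded. -/
theorem exists_isSymmetric_forall_solution_norm_le :
    ∃ (A : Lp ℝ 2 intervalMeasure →L[ℝ] Lp ℝ 2 intervalMeasure) (b : Lp ℝ 2 intervalMeasure)
      (R : ℝ), A.IsSymmetric ∧ ∀ (κ : ℝ) (z : Lp ℝ 2 intervalMeasure),
        A z + κ • z = b → κ ≠ 0 ∧ ‖z‖ ≤ R := by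
  have bound : ∀ᵐ t ∂intervalMeasure, |t| ≤ 1 := by
    filter_upwards [ae_restrict_mem measurableSet_Ioo] with t ht using (abs_lt.2 ht).le
  obtain ⟨A, hA, hAmul⟩ := exists_isSymmetric_ae_eq_mul
    (memLp_top_of_bound (f := fun t : ℝ => t) (by fun_prop) 1 bound)
  have hb : MemLp (fun t : ℝ => 1 - t ^ 2) 2 intervalMeasure := by
    refine .of_bound (by fun_prop) 1 ?_
    filter_upwards [bound] with t ht
    rw [Real.norm_eq_abs, abs_le]
    constructor <;> nlinarith [sq_abs t, abs_nonneg t]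
  refine ⟨A, hb.toLp _,
    measureUnivNNReal intervalMeasure ^ (2 : ENNReal).toReal⁻¹ * 2, hA, fun κ z hz => ?_⟩
  have hzt : ∀ᵐ t ∂intervalMeasure, (t + κ) * z t = 1 - t ^ 2 := by
    filter_upwards [hAmul z, hb.coeFn_toLp, Lp.coeFn_add (A z) (κ • z), Lp.coeFn_smul κ z]
      with t hA hb hadd hsmul
    rw [← hz, hadd, Pi.add_apply, hA, hsmul, Pi.smul_apply, smul_eq_mul] at hb
    linear_combination hb
  have hκ := one_le_abs_of_integrable_of_add_mul_eq ((Lp.memLp z).integrable one_le_two) hzt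
  exact ⟨abs_pos.1 (zero_lt_one.trans_le hκ),
    Lp.norm_le_of_ae_bound zero_le_two (ae_abs_le_two_of_add_mul_eq hκ hzt)⟩

end MultiplicationOperator

section HilbertBasis

variable {H : Type*} [NormedAddCommGroup H] [InnerProductSpace ℝ H]

theorem countable_of_orthonormal [TopologicalSpace.SeparableSpace H] {ι : Type*} {v : ι → H}
    (hv : Orthonormal ℝ v) : Countable ι := by
  have hdisj : (univ : Set ι).PairwiseDisjoint fun i => ball (v i) (1 / 2) := by
    intro i _ j _ hij
    refine ball_disjoint_ball ?_
    have hsq : ‖v i - v j‖ ^ 2 = 2 := by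
      rw [norm_sub_sq_real, hv.1, hv.1, hv.2 hij]
      norm_num
    rw [dist_eq_norm]
    nlinarith [norm_nonneg (v i - v j)]
  exact countable_univ_iff.1 (hdisj.countable_of_isOpen (fun _ _ => isOpen_ball)
    fun i _ => ⟨v i, mem_ball_self (by norm_num)⟩)

theorem infinite_of_hilbertBasis (hH : ¬ FiniteDimensional ℝ H) {ι : Type*}
    (b : HilbertBasis ι ℝ H) : Infinite ι := by
  by_contra hfin
  rw [not_infinite_iff_finite] at hfin
  have hspan : FiniteDimensional ℝ (Submodule.span ℝ (range b)) :=
    FiniteDimensional.span_of_finite ℝ (finite_range b)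
  rw [← (Submodule.closed_of_finiteDimensional
    (Submodule.span ℝ (range b))).submodule_topologicalClosure_eq, b.dense_span] at hspan
  exact hH (Module.Finite.equiv Submodule.topEquiv)

variable [CompleteSpace H] [TopologicalSpace.SeparableSpace H]

theorem nonempty_hilbertBasis (hH : ¬ FiniteDimensional ℝ H) (ι : Type*) [Countable ι]
    [Infinite ι] : Nonempty (HilbertBasis ι ℝ H) := by
  obtain ⟨w, b, -⟩ := exists_hilbertBasis ℝ H
  have := countable_of_orthonormal b.orthonormal
  have := infinite_of_hilbertBasis hH b
  obtain ⟨e⟩ := nonempty_equiv_of_countable (α := ι) (β := w)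
  refine ⟨HilbertBasis.mk (b.orthonormal.comp e e.injective) ?_⟩
  rw [e.surjective.range_comp, b.dense_span]

theorem nonempty_linearIsometryEquiv_of_separable (hH : ¬ FiniteDimensional ℝ H) {H' : Type*}
    [NormedAddCommGroup H'] [InnerProductSpace ℝ H'] [CompleteSpace H']
    [TopologicalSpace.SeparableSpace H'] (hH' : ¬ FiniteDimensional ℝ H') :
    Nonempty (H ≃ₗᵢ[ℝ] H') := by
  obtain ⟨b⟩ := nonempty_hilbertBasis hH ℕ
  obtain ⟨b'⟩ := nonempty_hilbertBasis hH' ℕ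
  exact ⟨b.repr.trans b'.repr.symm⟩

end HilbertBasis

section Cutoff

/-- For `p < q`, a smooth step function `ℝ → [0, 1]`: it is `1` on `(-∞, p]`, and nonzero exactly on
`(-∞, q)`. -/
noncomputable def cutoff (p q t : ℝ) : ℝ := Real.smoothTransition ((q - t) / (q - p))

variable {p q t : ℝ}

theorem cutoff_nonneg : 0 ≤ cutoff p q t := Real.smoothTransition.nonneg _

theorem cutoff_le_one : cutoff p q t ≤ 1 := Real.smoothTransition.le_one _

theorem cutoff_eq_one (hpq : p < q) (h : t ≤ p) : cutoff p q t = 1 :=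
  Real.smoothTransition.one_of_one_le ((one_le_div (sub_pos.2 hpq)).2 (by linarith))

theorem lt_of_cutoff_ne_zero (hpq : p < q) (h : cutoff p q t ≠ 0) : t < q := by
  contrapose! h
  exact Real.smoothTransition.zero_of_nonpos
    (div_nonpos_of_nonpos_of_nonneg (by linarith) (by linarith))

theorem contDiff_cutoff (p q : ℝ) : ContDiff ℝ ∞ (cutoff p q) :=
  Real.smoothTransition.contDiff.comp ((contDiff_const.sub contDiff_id).div_const _)

theorem deriv_cutoff_eq_zero_of_eq_one (h : cutoff p q t = 1) : deriv (cutoff p q) t = 0 :=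
  IsLocalMax.deriv_eq_zero (.of_forall fun _ => cutoff_le_one.trans_eq h.symm)

theorem deriv_cutoff_eq_zero_of_eq_zero (h : cutoff p q t = 0) : deriv (cutoff p q) t = 0 :=
  IsLocalMin.deriv_eq_zero (.of_forall fun _ => h.trans_le cutoff_nonneg)

end Cutoff

/-- A smooth function of size at most `η` which depends only on the component along `K`, and
such that the derivative of `‖x‖ ^ 2 + θ x` never vanishes on `K`. -/
structure IsRegularPerturbation {X : Type*} [NormedAddCommGroup X] [InnerProductSpace ℝ X]
    (K : Submodule ℝ X) (η : ℝ) (θ : X → ℝ) : Prop where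
  contDiff : ContDiff ℝ ∞ θ
  abs_le : ∀ x, |θ x| ≤ η
  fderiv_eq_zero : ∀ x, ∀ h ∈ Kᗮ, fderiv ℝ θ x h = 0
  exists_ne_zero : ∀ x, ∃ h ∈ K, 2 * ⟪x, h⟫_ℝ + fderiv ℝ θ x h ≠ 0

section SymmetricOperator

variable {H : Type*} [NormedAddCommGroup H] [InnerProductSpace ℝ H]

/-- The perturbation of `‖z‖ ^ 2` that replaces it by the quadratic function
`⟪A z, z⟫ - 2 * ⟪b, z⟫` on the ball of radius `R`. -/
noncomputable def quadraticPerturbation (A : H →L[ℝ] H) (b : H) (R : ℝ) (z : H) : ℝ :=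
  cutoff (R ^ 2) (R ^ 2 + 1) (‖z‖ ^ 2) * (⟪A z, z⟫_ℝ - 2 * ⟪b, z⟫_ℝ - ‖z‖ ^ 2)

variable (A : H →L[ℝ] H) (b : H) (R : ℝ)

theorem contDiff_quadraticPerturbation : ContDiff ℝ ∞ (quadraticPerturbation A b R) :=
  ((contDiff_cutoff _ _).comp (contDiff_norm_sq ℝ)).mul
    (((A.contDiff.inner ℝ contDiff_id).sub
      (contDiff_const.mul (contDiff_const.inner ℝ contDiff_id))).sub (contDiff_norm_sq ℝ))

theorem abs_quadraticPerturbation_le (z : H) :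
    |quadraticPerturbation A b R z| ≤ (‖A‖ + ‖b‖ + 1) * (R ^ 2 + 2) := by
  by_cases hσ : cutoff (R ^ 2) (R ^ 2 + 1) (‖z‖ ^ 2) = 0
  · rw [quadraticPerturbation, hσ, zero_mul, abs_zero]
    positivity
  have hz : ‖z‖ ^ 2 < R ^ 2 + 1 := lt_of_cutoff_ne_zero (by linarith) hσ
  have hA : |⟪A z, z⟫_ℝ| ≤ ‖A‖ * ‖z‖ ^ 2 := by
    calc |⟪A z, z⟫_ℝ| ≤ ‖A z‖ * ‖z‖ := abs_real_inner_le_norm _ _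
      _ ≤ ‖A‖ * ‖z‖ * ‖z‖ := by gcongr; exact A.le_opNorm z
      _ = ‖A‖ * ‖z‖ ^ 2 := by ring
  have hb : |2 * ⟪b, z⟫_ℝ| ≤ ‖b‖ * (‖z‖ ^ 2 + 1) := by
    rw [abs_mul, abs_two]
    nlinarith [abs_real_inner_le_norm b z, mul_nonneg (norm_nonneg b) (sq_nonneg (‖z‖ - 1))]
  calc |quadraticPerturbation A b R z|
      ≤ 1 * |⟪A z, z⟫_ℝ - 2 * ⟪b, z⟫_ℝ - ‖z‖ ^ 2| := by
        rw [quadraticPerturbation, abs_mul, abs_of_nonneg cutoff_nonneg]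
        gcongr
        exact cutoff_le_one
    _ ≤ |⟪A z, z⟫_ℝ| + |2 * ⟪b, z⟫_ℝ| + |‖z‖ ^ 2| := by
        rw [one_mul]
        exact (abs_sub _ _).trans (by gcongr; exact abs_sub _ _)
    _ ≤ ‖A‖ * ‖z‖ ^ 2 + ‖b‖ * (‖z‖ ^ 2 + 1) + ‖z‖ ^ 2 := by
        gcongr
        exact (abs_of_nonneg (sq_nonneg _)).le
    _ ≤ (‖A‖ + ‖b‖ + 1) * (R ^ 2 + 2) := by
        nlinarith [norm_nonneg A, norm_nonneg b]

variable {A b R}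

theorem two_mul_inner_add_fderiv_quadraticPerturbation (hA : A.IsSymmetric) (z h : H) :
    2 * ⟪z, h⟫_ℝ + fderiv ℝ (quadraticPerturbation A b R) z h =
      2 * ⟪(1 - cutoff (R ^ 2) (R ^ 2 + 1) (‖z‖ ^ 2) +
          deriv (cutoff (R ^ 2) (R ^ 2 + 1)) (‖z‖ ^ 2) *
            (⟪A z, z⟫_ℝ - 2 * ⟪b, z⟫_ℝ - ‖z‖ ^ 2)) • z +
        cutoff (R ^ 2) (R ^ 2 + 1) (‖z‖ ^ 2) • (A z - b), h⟫_ℝ := by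
  have hnorm : HasFDerivAt (fun z : H => ‖z‖ ^ 2) (2 • innerSL ℝ z) z :=
    (hasStrictFDerivAt_norm_sq z).hasFDerivAt
  have hcut := (((contDiff_cutoff (R ^ 2) (R ^ 2 + 1)).differentiable (by simp)
    (‖z‖ ^ 2)).hasDerivAt).comp_hasFDerivAt z hnorm
  have hquad := (A.hasFDerivAt (x := z)).inner ℝ (hasFDerivAt_id z)
  have hlin := ((hasFDerivAt_const b z).inner ℝ (hasFDerivAt_id z)).const_mul 2
  have hderiv := (hcut.mul ((hquad.sub hlin).sub hnorm)).fderiv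
  have hsymm : ⟪A h, z⟫_ℝ = ⟪A z, h⟫_ℝ := (hA h z).trans (real_inner_comm _ _)
  rw [show fderiv ℝ (quadraticPerturbation A b R) z = _ from hderiv]
  simp only [comp_apply, id_eq, Pi.sub_apply, add_apply, smul_apply, sub_apply,
    ContinuousLinearMap.comp_apply, ContinuousLinearMap.prod_apply, ContinuousLinearMap.id_apply,
    fderivInnerCLM_apply, hsymm, zero_apply, inner_zero_left, add_zero, smul_eq_mul,
    coe_innerSL_apply, nsmul_eq_mul, Nat.cast_ofNat, inner_add_left, inner_smul_left,
    Real.ringHom_apply, inner_sub_left]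
  ring

theorem isRegularPerturbation_quadraticPerturbation (hA : A.IsSymmetric)
    (hsol : ∀ (κ : ℝ) (z : H), A z + κ • z = b → κ ≠ 0 ∧ ‖z‖ ≤ R) :
    IsRegularPerturbation ⊤ ((‖A‖ + ‖b‖ + 1) * (R ^ 2 + 2)) (quadraticPerturbation A b R) where
  contDiff := contDiff_quadraticPerturbation A b R
  abs_le := abs_quadraticPerturbation_le A b R
  fderiv_eq_zero x h hh := by
    rw [Submodule.top_orthogonal_eq_bot, Submodule.mem_bot] at hh
    rw [hh, map_zero]
  exists_ne_zero z := by
    by_contra! hcrit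
    have hlt : R ^ 2 < R ^ 2 + 1 := lt_add_one _
    set σ := cutoff (R ^ 2) (R ^ 2 + 1) (‖z‖ ^ 2)
    set D := deriv (cutoff (R ^ 2) (R ^ 2 + 1)) (‖z‖ ^ 2) with hD
    set Q := ⟪A z, z⟫_ℝ - 2 * ⟪b, z⟫_ℝ - ‖z‖ ^ 2
    have hgrad : (1 - σ + D * Q) • z + σ • (A z - b) = 0 := by
      refine ext_inner_right ℝ fun h => ?_
      have := hcrit h Submodule.mem_top
      rw [two_mul_inner_add_fderiv_quadraticPerturbation hA] at this
      rw [inner_zero_left]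
      linarith
    by_cases hσ0 : σ = 0
    · have hz : z = 0 := by
        simpa [hσ0, hD, deriv_cutoff_eq_zero_of_eq_zero hσ0] using hgrad
      have : σ = 1 := cutoff_eq_one hlt (by simpa [hz] using sq_nonneg R)
      exact one_ne_zero (this.symm.trans hσ0)
    have heq : A z + (σ⁻¹ * (1 - σ + D * Q)) • z = b := by
      have := congrArg (σ⁻¹ • ·) hgrad
      simp only [smul_add, smul_smul, inv_mul_cancel₀ hσ0, one_smul, smul_zero] at this
      rw [← sub_eq_zero, ← this]
      abel
    obtain ⟨hκ, hz⟩ := hsol _ z heq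
    have hσ1 : σ = 1 := cutoff_eq_one hlt (by gcongr)
    refine hκ ?_
    rw [hD, deriv_cutoff_eq_zero_of_eq_one hσ1, hσ1]
    simp

end SymmetricOperator

section RegularPerturbation

variable {X : Type*} [NormedAddCommGroup X] [InnerProductSpace ℝ X] {K : Submodule ℝ X} {η : ℝ}
  {θ : X → ℝ}

theorem IsRegularPerturbation.mono (hθ : IsRegularPerturbation K η θ) {η' : ℝ} (h : η ≤ η') :
    IsRegularPerturbation K η' θ :=
  { hθ with abs_le := fun x => (hθ.abs_le x).trans h }

theorem IsRegularPerturbation.rescale (hθ : IsRegularPerturbation K η θ) {s : ℝ} (hs : s ≠ 0) :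
    IsRegularPerturbation K (s ^ 2 * η) fun x => s ^ 2 * θ (s⁻¹ • x) := by
  have hfderiv : ∀ x h, fderiv ℝ (fun x => s ^ 2 * θ (s⁻¹ • x)) x h =
      s * fderiv ℝ θ (s⁻¹ • x) h := fun x h => by
    have hdiff : DifferentiableAt ℝ (fun x => θ (s⁻¹ • x)) x :=
      (hθ.contDiff.comp (contDiff_const_smul s⁻¹)).differentiable (by simp) x
    rw [fderiv_const_mul hdiff, fderiv_comp_smul, smul_apply, smul_apply, smul_eq_mul, smul_eq_mul,
      ← mul_assoc, pow_two, mul_assoc s, mul_inv_cancel₀ hs, mul_one]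
  refine ⟨contDiff_const.mul (hθ.contDiff.comp (contDiff_const_smul s⁻¹)), fun x => ?_,
    fun x h hh => ?_, fun x => ?_⟩
  · rw [abs_mul, abs_of_nonneg (sq_nonneg s)]
    gcongr
    exact hθ.abs_le _
  · rw [hfderiv, hθ.fderiv_eq_zero _ h hh, mul_zero]
  · obtain ⟨h, hK, hne⟩ := hθ.exists_ne_zero (s⁻¹ • x)
    refine ⟨h, hK, fun h0 => hne ?_⟩
    rw [hfderiv] at h0
    rw [real_inner_smul_left]
    apply mul_left_cancel₀ hs
    linear_combination h0 + 2 * ⟪x, h⟫_ℝ * mul_inv_cancel₀ hs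

theorem IsRegularPerturbation.exists_of_pos (hθ : IsRegularPerturbation K η θ) {η' : ℝ}
    (hη' : 0 < η') : ∃ θ', IsRegularPerturbation K η' θ' := by
  have hη : 0 ≤ η := (abs_nonneg _).trans (hθ.abs_le 0)
  refine ⟨_, (hθ.rescale (s := √(η' / (η + 1))) (by positivity)).mono ?_⟩
  rw [Real.sq_sqrt (by positivity), div_mul_eq_mul_div, div_le_iff₀ (by positivity)]
  nlinarith

/- In finite dimension the coercive function `‖x‖ ^ 2 + θ x` would attain its minimum. -/
theorem IsRegularPerturbation.not_finiteDimensional (hθ : IsRegularPerturbation ⊤ η θ) :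
    ¬ FiniteDimensional ℝ X := by
  intro hX
  have := FiniteDimensional.proper ℝ X
  have hcoercive : Tendsto (fun x => ‖x‖ ^ 2 + θ x) (cocompact X) atTop :=
    tendsto_atTop_add_right_of_le _ (-η)
      ((tendsto_pow_atTop two_ne_zero).comp (tendsto_norm_cocompact_atTop (E := X)))
      fun x => neg_le_of_abs_le (hθ.abs_le x)
  obtain ⟨x, hx⟩ := Continuous.exists_forall_le
    ((contDiff_norm_sq ℝ (n := ∞)).continuous.add hθ.contDiff.continuous) hcoercive
  have hmin : IsLocalMin (fun x => ‖x‖ ^ 2 + θ x) x := .of_forall hx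
  obtain ⟨h, -, hne⟩ := hθ.exists_ne_zero x
  have hcrit := DFunLike.congr_fun hmin.fderiv_eq_zero h
  rw [fderiv_fun_add ((contDiff_norm_sq ℝ (n := ∞)).differentiable (by simp) x)
    (hθ.contDiff.differentiable (by simp) x), fderiv_norm_sq_apply] at hcrit
  exact hne (by simpa using hcrit)

theorem IsRegularPerturbation.comp_adjoint {H : Type*} [NormedAddCommGroup H]
    [InnerProductSpace ℝ H] [CompleteSpace H] [CompleteSpace X] {θ : H → ℝ}
    (hθ : IsRegularPerturbation ⊤ η θ) (I : H →ₗᵢ[ℝ] X) :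
    IsRegularPerturbation (LinearMap.range I.toLinearMap) η
      (θ ∘ I.toContinuousLinearMap.adjoint) := by
  set J := I.toContinuousLinearMap.adjoint
  have hJI : ∀ g, J (I g) = g := fun g => DFunLike.congr_fun I.adjoint_comp_self g
  have hinner : ∀ x g, ⟪J x, g⟫_ℝ = ⟪x, I g⟫_ℝ := fun x g =>
    ContinuousLinearMap.adjoint_inner_left I.toContinuousLinearMap g x
  have hfderiv : ∀ x h, fderiv ℝ (θ ∘ J) x h = fderiv ℝ θ (J x) (J h) := fun x h => by
    rw [fderiv_comp _ (hθ.contDiff.differentiable (by simp) _) J.differentiableAt, J.fderiv,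
      ContinuousLinearMap.comp_apply]
  refine ⟨hθ.contDiff.comp J.contDiff, fun x => hθ.abs_le _, fun x h hh => ?_, fun x => ?_⟩
  · have hJh : J h = 0 := ext_inner_right ℝ fun g => by
      rw [hinner, inner_zero_left]
      exact Submodule.inner_left_of_mem_orthogonal (LinearMap.mem_range_self _ g) hh
    rw [hfderiv, hJh, map_zero]
  · obtain ⟨g, -, hg⟩ := hθ.exists_ne_zero (J x)
    exact ⟨I g, LinearMap.mem_range_self _ g, by rwa [hfderiv, hJI, ← hinner]⟩

theorem exists_isRegularPerturbation [CompleteSpace X] [TopologicalSpace.SeparableSpace X]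
    (hK : IsClosed (K : Set X)) (hinf : ¬ FiniteDimensional ℝ K) (hη : 0 < η) :
    ∃ θ, IsRegularPerturbation K η θ := by
  obtain ⟨A, b, R, hA, hsol⟩ := exists_isSymmetric_forall_solution_norm_le
  have hθ := isRegularPerturbation_quadraticPerturbation hA hsol
  have : CompleteSpace K := hK.completeSpace_coe
  have : Fact ((2 : ENNReal) ≠ ⊤) := ⟨ENNReal.ofNat_ne_top⟩
  obtain ⟨e⟩ := nonempty_linearIsometryEquiv_of_separable hθ.not_finiteDimensional hinf
  have hrange : LinearMap.range (K.subtypeₗᵢ.comp e.toLinearIsometry).toLinearMap = K := by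
    ext x
    exact ⟨fun ⟨z, hz⟩ => hz ▸ (e z).2, fun hx => ⟨e.symm ⟨x, hx⟩, by simp⟩⟩
  rw [← hrange]
  exact (hθ.comp_adjoint _).exists_of_pos hη

end RegularPerturbation

/-- Data for cutting a Hilbert space `X` into mutually orthogonal infinite-dimensional blocks `K k`
on which `ℓ` vanishes, with a set `V` of points that are orthogonal to all but finitely many blocks.
Even inside the common orthogonal complement of the blocks and of finitely many points of `V`,
`ℓ` takes all its values. -/
structure IsBlockSystem {X E : Type*} [NormedAddCommGroup X] [InnerProductSpace ℝ X]
    [NormedAddCommGroup E] [NormedSpace ℝ E] (V : Set X) (K : ℕ → Submodule ℝ X)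
    (ℓ : X →L[ℝ] E) : Prop where
  isClosed : ∀ k, IsClosed (K k : Set X)
  not_finiteDimensional : ∀ k, ¬ FiniteDimensional ℝ (K k)
  isOrtho : Pairwise fun k l => K k ⟂ K l
  eventually_mem_orthogonal : ∀ a ∈ V, ∀ᶠ k in atTop, a ∈ (K k)ᗮ
  map_eq_zero : ∀ k, ∀ h ∈ K k, ℓ h = 0
  exists_map_eq : ∀ s ⊆ V, s.Finite → ∀ y, ∃ h, (∀ a ∈ s, ⟪a, h⟫_ℝ = 0) ∧
    (∀ k, h ∈ (K k)ᗮ) ∧ ℓ h = y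

section BlockSystem

variable {X E : Type*} [NormedAddCommGroup X] [InnerProductSpace ℝ X] [NormedAddCommGroup E]
  [NormedSpace ℝ E] {ι : Type*}

theorem mem_orthogonal_closure_span_range_iff {u : ι → X} {x : X} :
    x ∈ (Submodule.span ℝ (range u)).topologicalClosureᗮ ↔ ∀ i, ⟪u i, x⟫_ℝ = 0 := by
  rw [Submodule.orthogonal_closure, ← Submodule.span_singleton_le_iff_mem, ← Submodule.IsOrtho,
    Submodule.isOrtho_comm, Submodule.isOrtho_span]
  simp

theorem not_finiteDimensional_closure_span_range [Infinite ι] {u : ι → X} (hu : Orthonormal ℝ u) :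
    ¬ FiniteDimensional ℝ (Submodule.span ℝ (range u)).topologicalClosure := fun h => by
  have : FiniteDimensional ℝ (Submodule.span ℝ (range u)) :=
    Submodule.finiteDimensional_of_le (Submodule.le_topologicalClosure _)
  have := Module.Finite.finite_basis (Basis.span hu.linearIndependent)
  exact not_finite ι

theorem finite_setOf_inner_ne_zero {u : ι → X} (hu : Orthonormal ℝ u) {a : X}
    (ha : a ∈ Submodule.span ℝ (range u)) : {i | ⟪u i, a⟫_ℝ ≠ 0}.Finite := by
  obtain ⟨c, rfl⟩ := (Finsupp.mem_span_range_iff_exists_finsupp).1 ha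
  refine c.support.finite_toSet.subset fun i hi => Finsupp.mem_support_iff.2 ?_
  rwa [← hu.inner_right_finsupp c i, Finsupp.linearCombination_apply]

theorem eventually_forall_inner_eq_zero {κ : Type*} {u : ι × κ → X} (hu : Orthonormal ℝ u) {a : X}
    (ha : a ∈ Submodule.span ℝ (range u)) : ∀ᶠ i in cofinite, ∀ j, ⟪u (i, j), a⟫_ℝ = 0 := by
  filter_upwards [((finite_setOf_inner_ne_zero hu ha).image Prod.fst).eventually_cofinite_notMem]
    with i hi j
  by_contra hne
  exact hi ⟨(i, j), hne, rfl⟩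

theorem exists_forall_inner_eq_zero {κ : Type*} [Infinite κ] {u : ι × κ → X}
    (hu : Orthonormal ℝ u) {s : Set X} (hs : s ⊆ Submodule.span ℝ (range u)) (hfin : s.Finite) :
    ∃ j, ∀ a ∈ s, ∀ i, ⟪a, u (i, j)⟫_ℝ = 0 := by
  obtain ⟨j, hj⟩ := ((hfin.biUnion fun a ha =>
    finite_setOf_inner_ne_zero hu (hs ha)).image Prod.snd).exists_notMem
  refine ⟨j, fun a ha i => ?_⟩
  rw [real_inner_comm]
  by_contra hne
  exact hj ⟨(i, j), mem_biUnion ha hne, rfl⟩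

theorem exists_inner_eq_two_inv_pow [CompleteSpace X] {u : ℕ → X} (hu : Orthonormal ℝ u) :
    ∃ g : X, (∀ j, ⟪g, u j⟫_ℝ = 2⁻¹ ^ j) ∧ ∀ x, (∀ j, ⟪u j, x⟫_ℝ = 0) → ⟪g, x⟫_ℝ = 0 := by
  have hsum : Summable fun j => (2⁻¹ : ℝ) ^ j • u j := by
    refine .of_norm ?_
    simpa [norm_smul, hu.1] using summable_geometric_two
  have hinner : ∀ x, ⟪∑' j, (2⁻¹ : ℝ) ^ j • u j, x⟫_ℝ = ∑' j, 2⁻¹ ^ j * ⟪u j, x⟫_ℝ := fun x => by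
    simp only [real_inner_comm x, (innerSL ℝ x).map_tsum hsum, ← innerSL_apply_apply ℝ x,
      map_smul, smul_eq_mul]
  refine ⟨∑' j, (2⁻¹ : ℝ) ^ j • u j, fun j => ?_, fun x hx => ?_⟩
  · rw [hinner, tsum_eq_single j fun i hij => by rw [hu.2 hij, mul_zero],
      real_inner_self_eq_norm_sq, hu.1, one_pow, mul_one]
  · rw [hinner]
    simp [hx]

theorem exists_continuousLinearMap_of_orthonormal [CompleteSpace X] {P : Type*} [Finite P]
    {u : P × ℕ → X} (hu : Orthonormal ℝ u) (e : P → E) :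
    ∃ ℓ : X →L[ℝ] E, (∀ p j, ℓ (u (p, j)) = (2⁻¹ : ℝ) ^ j • e p) ∧
      ∀ x, (∀ i, ⟪u i, x⟫_ℝ = 0) → ℓ x = 0 := by
  classical
  cases nonempty_fintype P
  choose g hg hg0 using fun p : P =>
    exists_inner_eq_two_inv_pow (hu.comp (fun j => (p, j)) (Prod.mk_right_injective p))
  refine ⟨∑ p, (innerSL ℝ (g p)).smulRight (e p), fun p j => ?_, fun x hx => ?_⟩
  · rw [sum_apply, Finset.sum_eq_single_of_mem p (Finset.mem_univ p) fun p' _ hp' => ?_]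
    · exact congrArg (· • e p) (hg p j)
    · have : ⟪g p', u (p, j)⟫_ℝ = 0 := hg0 p' _ fun i => hu.2 (by simp [hp'])
      simp [this]
  · simp [fun p => hg0 p x fun j => hx (p, j)]

theorem exists_isBlockSystem [CompleteSpace X] [TopologicalSpace.SeparableSpace X]
    [FiniteDimensional ℝ E] (hX : ¬ FiniteDimensional ℝ X) :
    ∃ (V : Set X) (K : ℕ → Submodule ℝ X) (ℓ : X →L[ℝ] E), Dense V ∧ IsBlockSystem V K ℓ := by
  let P := Fin (finrank ℝ E)
  let e : Basis P ℝ E := finBasis ℝ E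
  obtain ⟨b⟩ := nonempty_hilbertBasis hX ((P ⊕ ℕ) × ℕ)
  have hb := b.orthonormal
  let row (k : ℕ) (j : ℕ) : X := b (.inr k, j)
  have hrow : ∀ k, Orthonormal ℝ (row k) := fun k => hb.comp _ (Prod.mk_right_injective _)
  have hu : Orthonormal ℝ fun i : P × ℕ => b (.inl i.1, i.2) :=
    hb.comp (Prod.map Sum.inl id) (Sum.inl_injective.prodMap injective_id)
  obtain ⟨ℓ, hℓ, hℓ0⟩ := exists_continuousLinearMap_of_orthonormal hu e
  refine ⟨Submodule.span ℝ (range b),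
    fun k => (Submodule.span ℝ (range (row k))).topologicalClosure, ℓ,
    Submodule.dense_iff_topologicalClosure_eq_top.2 b.dense_span, ?_⟩
  refine
    { isClosed := fun k => Submodule.isClosed_topologicalClosure _
      not_finiteDimensional := fun k => not_finiteDimensional_closure_span_range (hrow k)
      isOrtho := fun k l hkl => ?_
      eventually_mem_orthogonal := fun a ha => ?_
      map_eq_zero := fun k h hh => ?_
      exists_map_eq := fun s hs hfin y => ?_ }
  · refine Submodule.IsOrtho.symm fun x hx => mem_orthogonal_closure_span_range_iff.2 fun j => ?_
    refine Submodule.inner_left_of_mem_orthogonal hx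
      (mem_orthogonal_closure_span_range_iff.2 fun i => hb.2 ?_)
    simp [hkl.symm]
  · rw [← Nat.cofinite_eq_atTop]
    filter_upwards [Sum.inr_injective.tendsto_cofinite.eventually
      (eventually_forall_inner_eq_zero hb ha)] with k hk
    exact mem_orthogonal_closure_span_range_iff.2 hk
  · refine hℓ0 h fun i => Submodule.inner_left_of_mem_orthogonal hh
      (mem_orthogonal_closure_span_range_iff.2 fun j => hb.2 (by simp))
  · obtain ⟨j, hj⟩ := exists_forall_inner_eq_zero hb hs hfin
    refine ⟨∑ p, e.repr y p • (2 : ℝ) ^ j • b (.inl p, j), fun a ha => ?_, fun k => ?_, ?_⟩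
    · simp [inner_sum, inner_smul_right, hj a ha]
    · exact sum_mem fun p _ => Submodule.smul_mem _ _ (Submodule.smul_mem _ _
        (mem_orthogonal_closure_span_range_iff.2 fun i => hb.2 (by simp)))
    · simp [hℓ, e.sum_repr]

end BlockSystem

section Stationary

variable {X : Type*} [NormedAddCommGroup X] [NormedSpace ℝ X]

/-- The functions whose derivative at `x` vanishes in the direction `h`; differentiability is
required to rule out the junk value of `fderiv`. -/
noncomputable def stationarySubalgebra (x h : X) : Subalgebra ℝ (X → ℝ) where
  carrier := {g | DifferentiableAt ℝ g x ∧ fderiv ℝ g x h = 0}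
  mul_mem' := fun ⟨hf, hf0⟩ ⟨hg, hg0⟩ => ⟨hf.mul hg, by simp [fderiv_mul hf hg, hf0, hg0]⟩
  add_mem' := fun ⟨hf, hf0⟩ ⟨hg, hg0⟩ => ⟨hf.add hg, by simp [fderiv_add hf hg, hf0, hg0]⟩
  algebraMap_mem' c := by
    refine ⟨differentiableAt_const c, ?_⟩
    rw [show (algebraMap ℝ (X → ℝ) c) = fun _ => c from rfl, fderiv_const_apply, zero_apply]

variable {x h : X} {g : X → ℝ}

theorem mem_stationarySubalgebra_of_isLocalMin (hg : DifferentiableAt ℝ g x)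
    (hmin : IsLocalMin g x) : g ∈ stationarySubalgebra x h :=
  ⟨hg, by rw [hmin.fderiv_eq_zero, zero_apply]⟩

theorem comp_mem_stationarySubalgebra {φ : ℝ → ℝ} (hφ : DifferentiableAt ℝ φ (g x))
    (hg : g ∈ stationarySubalgebra x h) : φ ∘ g ∈ stationarySubalgebra x h :=
  ⟨hφ.comp x hg.1, by
    rw [fderiv_comp x hφ hg.1, ContinuousLinearMap.comp_apply, hg.2, map_zero]⟩

end Stationary

section OrderedWeight

variable {X : Type*}

/-- The product of the factors `1 - β m j`, `j ≤ m`, over the pairs `(m, j)` that lexicographically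
precede `(n, i)`. -/
def remainder (β : ℕ → ℕ → X → ℝ) (n i : ℕ) : X → ℝ :=
  (∏ m ∈ Finset.range n, ∏ j ∈ Finset.range (m + 1), (1 - β m j)) *
    ∏ j ∈ Finset.range i, (1 - β n j)

/-- The share of `β n i` in the partition of unity obtained from the functions `β m j`, `j ≤ m`,
taken in lexicographic order. -/
def orderedWeight (β : ℕ → ℕ → X → ℝ) (n i : ℕ) : X → ℝ := remainder β n i * β n i

variable {β : ℕ → ℕ → X → ℝ}

theorem remainder_add_one (β : ℕ → ℕ → X → ℝ) (n : ℕ) :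
    remainder β (n + 1) 0 = remainder β n (n + 1) := by
  rw [remainder, remainder, Finset.prod_range_succ, Finset.prod_range_zero, mul_one]

theorem orderedWeight_eq_sub (β : ℕ → ℕ → X → ℝ) (n i : ℕ) :
    orderedWeight β n i = remainder β n i - remainder β n (i + 1) := by
  rw [orderedWeight, remainder, remainder, Finset.prod_range_succ]
  ring

theorem sum_orderedWeight (β : ℕ → ℕ → X → ℝ) (N : ℕ) :
    ∑ n ∈ Finset.range N, ∑ i ∈ Finset.range (n + 1), orderedWeight β n i =
      1 - remainder β N 0 := by
  simp only [orderedWeight_eq_sub, Finset.sum_range_sub', ← remainder_add_one]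
  simp [remainder]

theorem remainder_apply_eq_zero {m j n i : ℕ} {x : X} (hj : j ≤ m) (hβ : β m j x = 1)
    (hmn : m < n) : remainder β n i x = 0 := by
  have hprod : (∏ m ∈ Finset.range n, ∏ j ∈ Finset.range (m + 1), (1 - β m j)) x = 0 := by
    simp only [Finset.prod_apply]
    refine Finset.prod_eq_zero (Finset.mem_range.2 hmn)
      (Finset.prod_eq_zero (Finset.mem_range.2 (Nat.lt_succ_of_le hj)) ?_)
    simp [hβ]
  rw [remainder, Pi.mul_apply, hprod, zero_mul]

theorem orderedWeight_apply_eq_zero {m j n i : ℕ} {x : X} (hj : j ≤ m) (hβ : β m j x = 1)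
    (hmn : m < n) : orderedWeight β n i x = 0 := by
  rw [orderedWeight, Pi.mul_apply, remainder_apply_eq_zero hj hβ hmn, zero_mul]

theorem orderedWeight_nonneg (h0 : ∀ n i, 0 ≤ β n i) (h1 : ∀ n i, β n i ≤ 1) (n i : ℕ) :
    0 ≤ orderedWeight β n i :=
  mul_nonneg (mul_nonneg (Finset.prod_nonneg fun _ _ => Finset.prod_nonneg fun _ _ =>
    sub_nonneg.2 (h1 _ _)) (Finset.prod_nonneg fun _ _ => sub_nonneg.2 (h1 _ _))) (h0 n i)

theorem orderedWeight_mem (S : Subalgebra ℝ (X → ℝ)) {n i : ℕ} (hi : i ≤ n)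
    (hβ : ∀ m ≤ n, ∀ j ≤ m, β m j ∈ S) : orderedWeight β n i ∈ S := by
  have hsub : ∀ m ≤ n, ∀ j ≤ m, 1 - β m j ∈ S := fun m hm j hj =>
    S.sub_mem S.one_mem (hβ m hm j hj)
  refine S.mul_mem (S.mul_mem (S.prod_mem fun m hm => S.prod_mem fun j hj => ?_)
    (S.prod_mem fun j hj => ?_)) (hβ n le_rfl i hi)
  · exact hsub m (Finset.mem_range.1 hm).le j (Nat.le_of_lt_succ (Finset.mem_range.1 hj))
  · exact hsub n le_rfl j ((Finset.mem_range.1 hj).le.trans hi)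

theorem support_orderedWeight_subset {m j : ℕ} {x : X} (hj : j ≤ m) (hβ : β m j x = 1) :
    (support fun q : Σ n : ℕ, Fin (n + 1) => orderedWeight β q.1 q.2 x) ⊆
      ((Finset.range (m + 1)).sigma fun _ => Finset.univ : Finset (Σ n : ℕ, Fin (n + 1))) := by
  intro q hq
  refine Finset.mem_coe.2 (Finset.mem_sigma.2 ⟨Finset.mem_range.2 ?_, Finset.mem_univ _⟩)
  by_contra! hmq
  exact hq (orderedWeight_apply_eq_zero hj hβ hmq)

theorem finsum_orderedWeight_eq_one {m j : ℕ} {x : X} (hj : j ≤ m) (hβ : β m j x = 1) :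
    ∑ᶠ q : Σ n : ℕ, Fin (n + 1), orderedWeight β q.1 q.2 x = 1 := by
  have hsum := congrFun (sum_orderedWeight β (m + 1)) x
  simp only [Finset.sum_apply, Pi.sub_apply, Pi.one_apply,
    remainder_apply_eq_zero hj hβ m.lt_succ_self, sub_zero] at hsum
  rw [finsum_eq_sum_of_support_subset _ (support_orderedWeight_subset hj hβ), Finset.sum_sigma,
    ← hsum]
  exact Finset.sum_congr rfl fun n _ => (Finset.sum_range fun i => orderedWeight β n i x).symm

theorem contDiff_orderedWeight [NormedAddCommGroup X] [NormedSpace ℝ X]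
    (hβ : ∀ n i, ContDiff ℝ ∞ (β n i)) (n i : ℕ) : ContDiff ℝ ∞ (orderedWeight β n i) :=
  ((contDiff_prod' fun m _ => contDiff_prod' fun j _ => contDiff_const.sub (hβ m j)).mul
    (contDiff_prod' fun j _ => contDiff_const.sub (hβ n j))).mul (hβ n i)

end OrderedWeight

/-- Along every point of `O` the nonnegative smooth functions `W q` form a locally finite partition
of unity, and `ℓ` takes all its values on the common kernel of their derivatives. -/
structure IsStationaryPartition {X E κ : Type*} [NormedAddCommGroup X] [NormedSpace ℝ X]
    [NormedAddCommGroup E] [NormedSpace ℝ E] (O : Set X) (ℓ : X →L[ℝ] E) (W : κ → X → ℝ) :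
    Prop where
  contDiff : ∀ q, ContDiff ℝ ∞ (W q)
  nonneg : ∀ q x, 0 ≤ W q x
  exists_finset : ∀ x ∈ O, ∃ s : Finset κ, ∀ᶠ y in 𝓝 x, (support fun q => W q y) ⊆ s
  finsum_eq_one : ∀ x ∈ O, ∑ᶠ q, W q x = 1
  exists_map_eq : ∀ x ∈ O, ∀ y, ∃ h, (∀ q, fderiv ℝ (W q) x h = 0) ∧ ℓ h = y

/-- The gap left at stage `n` between `ρ ^ 2` and the squared distances on the plateau of a bump.
It shrinks fast enough for the bump of the next stage to be `1` on the support of the present one,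
perturbations included. -/
noncomputable def margin (ρ : ℝ) (n : ℕ) : ℝ := ρ ^ 2 / 4 ^ n

/-- The ball of centre `a i` and radius `r i` enters at stage `i`; the block `K n` is orthogonal to
the centres of all balls present at stage `n`, and carries a perturbation `Θ n` which is small
compared to their margins. -/
structure IsAdaptedToBalls {X : Type*} [NormedAddCommGroup X] [InnerProductSpace ℝ X]
    (a : ℕ → X) (r : ℕ → ℝ) (K : ℕ → Submodule ℝ X) (Θ : ℕ → X → ℝ) : Prop where
  radius_pos : ∀ i, 0 < r i
  isOrtho : Pairwise fun k l => K k ⟂ K l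
  center_mem : ∀ n, ∀ i ≤ n, a i ∈ (K n)ᗮ
  isRegularPerturbation :
    ∀ n, ∀ i ≤ n, IsRegularPerturbation (K n) (margin (r i) n / 8) (Θ n)

section Bump

variable {X : Type*} [NormedAddCommGroup X] [InnerProductSpace ℝ X]

/-- The squared distance to `a`, made regular on the blocks `n` and `n + 1`. -/
def perturbedSqDist (Θ : ℕ → X → ℝ) (n : ℕ) (a x : X) : ℝ := ‖x - a‖ ^ 2 + Θ n x + Θ (n + 1) x

/-- A bump function on the ball of centre `a i` and radius `r i`, whose margin shrinks with the
stage `n`. -/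
noncomputable def stageBump (a : ℕ → X) (r : ℕ → ℝ) (Θ : ℕ → X → ℝ) (n i : ℕ) : X → ℝ :=
  cutoff (r i ^ 2 - margin (r i) n) (r i ^ 2 - margin (r i) n / 2) ∘ perturbedSqDist Θ n (a i)

variable {a : ℕ → X} {r : ℕ → ℝ} {K : ℕ → Submodule ℝ X} {Θ : ℕ → X → ℝ}

theorem contDiff_perturbedSqDist (hΘ : ∀ n, ContDiff ℝ ∞ (Θ n)) (n : ℕ) (c : X) :
    ContDiff ℝ ∞ (perturbedSqDist Θ n c) :=
  (((contDiff_id.sub contDiff_const).norm_sq ℝ).add (hΘ n)).add (hΘ (n + 1))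

theorem fderiv_perturbedSqDist (hΘ : ∀ n, ContDiff ℝ ∞ (Θ n)) (n : ℕ) (c x h : X) :
    fderiv ℝ (perturbedSqDist Θ n c) x h =
      2 * ⟪x - c, h⟫_ℝ + fderiv ℝ (Θ n) x h + fderiv ℝ (Θ (n + 1)) x h := by
  have hdiff : ∀ n, HasFDerivAt (Θ n) (fderiv ℝ (Θ n) x) x := fun n =>
    ((hΘ n).differentiable (by simp) x).hasFDerivAt
  have := ((((hasFDerivAt_id x).sub_const c).norm_sq).add (hdiff n)).add (hdiff (n + 1))
  rw [show fderiv ℝ (perturbedSqDist Θ n c) x = _ from this.fderiv]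
  simp [inner_sub_left]

theorem contDiff_stageBump (hΘ : ∀ n, ContDiff ℝ ∞ (Θ n)) (n i : ℕ) :
    ContDiff ℝ ∞ (stageBump a r Θ n i) :=
  (contDiff_cutoff _ _).comp (contDiff_perturbedSqDist hΘ n (a i))

theorem margin_add_one (ρ : ℝ) (n : ℕ) : margin ρ (n + 1) = margin ρ n / 4 := by
  rw [margin, margin, pow_succ (4 : ℝ), div_div]

theorem margin_pos {ρ : ℝ} (hρ : 0 < ρ) (n : ℕ) : 0 < margin ρ n :=
  div_pos (pow_pos hρ 2) (by positivity)

theorem margin_le_margin {ρ ρ' : ℝ} (hρ : 0 ≤ ρ) (h : ρ ≤ ρ') (n : ℕ) :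
    margin ρ n ≤ margin ρ' n := by
  unfold margin
  gcongr

theorem tendsto_margin (ρ : ℝ) : Tendsto (margin ρ) atTop (𝓝 0) :=
  (tendsto_pow_atTop_atTop_of_one_lt (by norm_num)).const_div_atTop _

namespace IsAdaptedToBalls

theorem contDiff (hΘ : IsAdaptedToBalls a r K Θ) (n : ℕ) : ContDiff ℝ ∞ (Θ n) :=
  (hΘ.isRegularPerturbation n n le_rfl).contDiff

theorem margin_pos (hΘ : IsAdaptedToBalls a r K Θ) (n i : ℕ) : 0 < margin (r i) n :=
  _root_.margin_pos (hΘ.radius_pos i) n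

theorem threshold_lt (hΘ : IsAdaptedToBalls a r K Θ) (n i : ℕ) :
    r i ^ 2 - margin (r i) n < r i ^ 2 - margin (r i) n / 2 := by
  linarith [hΘ.margin_pos n i]

theorem abs_le_margin (hΘ : IsAdaptedToBalls a r K Θ) {n i : ℕ} (hi : i ≤ n) (x : X) :
    |Θ n x| ≤ margin (r i) n / 8 ∧ |Θ (n + 1) x| ≤ margin (r i) n / 32 ∧
      |Θ (n + 2) x| ≤ margin (r i) n / 128 := by
  have hle : ∀ m ≥ i, |Θ m x| ≤ margin (r i) m / 8 := fun m hm =>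
    (hΘ.isRegularPerturbation m i hm).abs_le x
  have h1 := hle (n + 1) (by lia)
  have h2 := hle (n + 2) (by lia)
  rw [margin_add_one] at h1
  rw [margin_add_one, margin_add_one] at h2
  exact ⟨hle n hi, h1.trans_eq (by ring), h2.trans_eq (by ring)⟩

theorem perturbedSqDist_lt_of_stageBump_ne_zero (hΘ : IsAdaptedToBalls a r K Θ) {n i : ℕ} {x : X}
    (hx : stageBump a r Θ n i x ≠ 0) :
    perturbedSqDist Θ n (a i) x < r i ^ 2 - margin (r i) n / 2 :=
  lt_of_cutoff_ne_zero (hΘ.threshold_lt n i) hx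

theorem stageBump_add_one_eq_one (hΘ : IsAdaptedToBalls a r K Θ) {n i : ℕ} (hi : i ≤ n) {x : X}
    (hx : stageBump a r Θ n i x ≠ 0) : stageBump a r Θ (n + 1) i x = 1 := by
  refine cutoff_eq_one (hΘ.threshold_lt _ i) ?_
  have hlt := hΘ.perturbedSqDist_lt_of_stageBump_ne_zero hx
  obtain ⟨h0, -, h2⟩ := hΘ.abs_le_margin hi x
  rw [perturbedSqDist] at hlt ⊢
  rw [margin_add_one]
  linarith [neg_le_of_abs_le h0, le_of_abs_le h2, hΘ.margin_pos n i]

theorem mem_ball_of_stageBump_ne_zero (hΘ : IsAdaptedToBalls a r K Θ) {n i : ℕ} (hi : i ≤ n)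
    {x : X} (hx : stageBump a r Θ n i x ≠ 0) : x ∈ ball (a i) (r i) := by
  have hlt := hΘ.perturbedSqDist_lt_of_stageBump_ne_zero hx
  obtain ⟨h0, h1, -⟩ := hΘ.abs_le_margin hi x
  rw [perturbedSqDist] at hlt
  rw [mem_ball, dist_eq_norm]
  refine lt_of_pow_lt_pow_left₀ 2 (hΘ.radius_pos i).le ?_
  linarith [neg_le_of_abs_le h0, neg_le_of_abs_le h1, hΘ.margin_pos n i]

theorem exists_eventually_stageBump_eq_one (hΘ : IsAdaptedToBalls a r K Θ) {i : ℕ} {x : X}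
    (hx : x ∈ ball (a i) (r i)) : ∃ n ≥ i, ∀ᶠ y in 𝓝 x, stageBump a r Θ n i y = 1 := by
  rw [mem_ball, dist_eq_norm] at hx
  have hgap : 0 < r i ^ 2 - ‖x - a i‖ ^ 2 := sub_pos.2 (by gcongr)
  obtain ⟨n, hsmall, hn⟩ := (((tendsto_margin (r i)).eventually (gt_mem_nhds (half_pos hgap))).and
    (eventually_ge_atTop i)).exists
  obtain ⟨h0, h1, -⟩ := hΘ.abs_le_margin hn x
  have hlt : perturbedSqDist Θ n (a i) x < r i ^ 2 - margin (r i) n := by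
    rw [perturbedSqDist]
    linarith [le_of_abs_le h0, le_of_abs_le h1, hΘ.margin_pos n i]
  refine ⟨n, hn, ?_⟩
  filter_upwards [(contDiff_perturbedSqDist hΘ.contDiff n (a i)).continuous.continuousAt.eventually
    (gt_mem_nhds hlt)] with y hy
  exact cutoff_eq_one (hΘ.threshold_lt n i) hy.le

theorem exists_fderiv_perturbedSqDist_eq_zero (hΘ : IsAdaptedToBalls a r K Θ) {n : ℕ} (x : X)
    {v : X} (hva : ∀ i ≤ n, ⟪a i, v⟫_ℝ = 0) (hvK : ∀ k, v ∈ (K k)ᗮ) :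
    ∃ h ∈ K n, ∀ m ≤ n, n ≤ m + 1 → ∀ i ≤ n,
      fderiv ℝ (perturbedSqDist Θ m (a i)) x (v - h) = 0 := by
  have hreg : ∀ n, IsRegularPerturbation (K n) (margin (r n) n / 8) (Θ n) := fun n =>
    hΘ.isRegularPerturbation n n le_rfl
  obtain ⟨g, hg, hne⟩ := (hreg n).exists_ne_zero x
  set h := (2 * ⟪x, v⟫_ℝ / (2 * ⟪x, g⟫_ℝ + fderiv ℝ (Θ n) x g)) • g with hh
  have hK : h ∈ K n := (K n).smul_mem _ hg
  have hxh : 2 * ⟪x, h⟫_ℝ + fderiv ℝ (Θ n) x h = 2 * ⟪x, v⟫_ℝ := by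
    rw [hh, inner_smul_right, map_smul, smul_eq_mul]
    field_simp
  have hself : fderiv ℝ (Θ n) x (v - h) = -fderiv ℝ (Θ n) x h := by
    rw [map_sub, (hreg n).fderiv_eq_zero x v (hvK n), zero_sub]
  have hother : ∀ k ≠ n, fderiv ℝ (Θ k) x (v - h) = 0 := fun k hk =>
    (hreg k).fderiv_eq_zero x _ (Submodule.sub_mem _ (hvK k) ((hΘ.isOrtho hk).ge hK))
  refine ⟨h, hK, fun m hmn hnm i hi => ?_⟩
  have hdist : ⟪x - a i, v - h⟫_ℝ = ⟪x, v⟫_ℝ - ⟪x, h⟫_ℝ := by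
    rw [inner_sub_left, inner_sub_right, inner_sub_right (a i), hva i hi,
      Submodule.inner_left_of_mem_orthogonal hK (hΘ.center_mem n i hi), sub_zero, sub_zero]
  have hsum : fderiv ℝ (Θ m) x (v - h) + fderiv ℝ (Θ (m + 1)) x (v - h) =
      -fderiv ℝ (Θ n) x h := by
    rcases hmn.eq_or_lt with rfl | hlt
    · rw [hself, hother _ (Nat.succ_ne_self _), add_zero]
    · obtain rfl : n = m + 1 := le_antisymm hnm hlt
      rw [hself, hother m (Nat.succ_ne_self _).symm, zero_add]
  rw [fderiv_perturbedSqDist hΘ.contDiff, hdist]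
  linarith

/- At stages before `n - 1` the bumps vanish at `x`, since a bump that does not vanish is followed
by one equal to `1`; the two remaining stages both involve `Θ n`. -/
theorem exists_stageBump_mem_stationarySubalgebra (hΘ : IsAdaptedToBalls a r K Θ) {n : ℕ} {x : X}
    (hx : ∀ m < n, ∀ i ≤ m, stageBump a r Θ m i x ≠ 1) {v : X} (hva : ∀ i ≤ n, ⟪a i, v⟫_ℝ = 0)
    (hvK : ∀ k, v ∈ (K k)ᗮ) :
    ∃ h ∈ K n, ∀ m ≤ n, ∀ i ≤ m, stageBump a r Θ m i ∈ stationarySubalgebra x (v - h) := by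
  obtain ⟨h, hK, hh⟩ := hΘ.exists_fderiv_perturbedSqDist_eq_zero x hva hvK
  refine ⟨h, hK, fun m hmn i hi => ?_⟩
  by_cases hnm : n ≤ m + 1
  · exact comp_mem_stationarySubalgebra ((contDiff_cutoff _ _).differentiable (by simp) _)
      ⟨(contDiff_perturbedSqDist hΘ.contDiff m (a i)).differentiable (by simp) x,
        hh m hmn hnm i (hi.trans hmn)⟩
  · have hzero : stageBump a r Θ m i x = 0 := by
      by_contra hne
      exact hx (m + 1) (not_le.1 hnm) i (by lia) (hΘ.stageBump_add_one_eq_one hi hne)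
    exact mem_stationarySubalgebra_of_isLocalMin
      ((contDiff_stageBump hΘ.contDiff m i).differentiable (by simp) x)
      (.of_forall fun y => hzero.trans_le cutoff_nonneg)

end IsAdaptedToBalls

end Bump

section StationaryPartition

variable {X E : Type*} [NormedAddCommGroup X] [InnerProductSpace ℝ X] [NormedAddCommGroup E]
  [NormedSpace ℝ E] {V : Set X} {K : ℕ → Submodule ℝ X} {ℓ : X →L[ℝ] E} {a : ℕ → X} {r : ℕ → ℝ}
  {Θ : ℕ → X → ℝ}

theorem IsBlockSystem.comp_strictMono (hK : IsBlockSystem V K ℓ) {φ : ℕ → ℕ} (hφ : StrictMono φ) :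
    IsBlockSystem V (K ∘ φ) ℓ where
  isClosed k := hK.isClosed (φ k)
  not_finiteDimensional k := hK.not_finiteDimensional (φ k)
  isOrtho _ _ hkl := hK.isOrtho (hφ.injective.ne hkl)
  eventually_mem_orthogonal a ha := hφ.tendsto_atTop.eventually (hK.eventually_mem_orthogonal a ha)
  map_eq_zero k := hK.map_eq_zero (φ k)
  exists_map_eq s hs hfin y := by
    obtain ⟨h, hsh, hKh, hy⟩ := hK.exists_map_eq s hs hfin y
    exact ⟨h, hsh, fun k => hKh (φ k), hy⟩

theorem IsBlockSystem.exists_isAdaptedToBalls [CompleteSpace X]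
    [TopologicalSpace.SeparableSpace X] (hK : IsBlockSystem V K ℓ) (ha : ∀ i, a i ∈ V)
    (hr : ∀ i, 0 < r i) : ∃ K' Θ, IsBlockSystem V K' ℓ ∧ IsAdaptedToBalls a r K' Θ := by
  obtain ⟨φ, hφ, hφa⟩ := extraction_forall_of_eventually (P := fun n k => ∀ i ≤ n, a i ∈ (K k)ᗮ)
    fun n => (finite_Iic n).eventually_all.2 fun i _ => hK.eventually_mem_orthogonal (a i) (ha i)
  have hK' := hK.comp_strictMono hφ
  have hΘ : ∀ n, ∃ θ, ∀ i ≤ n,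
      IsRegularPerturbation (K (φ n)) (margin (r i) n / 8) θ := fun n => by
    obtain ⟨j, -, hj⟩ := exists_min_image (Iic n) r (finite_Iic n) ⟨0, n.zero_le⟩
    have hmargin : 0 < margin (r j) n := margin_pos (hr j) n
    obtain ⟨θ, hθ⟩ := exists_isRegularPerturbation (hK'.isClosed n) (hK'.not_finiteDimensional n)
      (by positivity : 0 < margin (r j) n / 8)
    refine ⟨θ, fun i hi => hθ.mono ?_⟩
    gcongr
    exact margin_le_margin (hr j).le (hj i hi) n
  choose Θ hΘ using hΘ
  exact ⟨K ∘ φ, Θ, hK', hr, hK'.isOrtho, hφa, hΘ⟩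

theorem IsAdaptedToBalls.exists_orderedWeight_stationary (hΘ : IsAdaptedToBalls a r K Θ)
    (hK : IsBlockSystem V K ℓ) (ha : ∀ i, a i ∈ V) {x : X}
    (hx : ∃ n, ∃ i ≤ n, stageBump a r Θ n i x = 1) (y : E) :
    ∃ h, (∀ n, ∀ i ≤ n, fderiv ℝ (orderedWeight (stageBump a r Θ) n i) x h = 0) ∧ ℓ h = y := by
  classical
  obtain ⟨i₀, hi₀, hone⟩ := Nat.find_spec hx
  obtain ⟨v, hva, hvK, rfl⟩ := hK.exists_map_eq (a '' Iic (Nat.find hx))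
    (image_subset_iff.2 fun i _ => ha i) ((finite_Iic _).image a) y
  obtain ⟨h, hh, hstat⟩ := hΘ.exists_stageBump_mem_stationarySubalgebra (x := x)
    (fun m hm i hi hone => Nat.find_min hx hm ⟨i, hi, hone⟩)
    (fun i hi => hva _ (mem_image_of_mem a hi)) hvK
  refine ⟨v - h, fun n i hi => ?_, by rw [map_sub, hK.map_eq_zero _ h hh, sub_zero]⟩
  by_cases hn : n ≤ Nat.find hx
  · exact (orderedWeight_mem _ hi fun m hm j hj => hstat m (hm.trans hn) j hj).2
  · have hzero := orderedWeight_apply_eq_zero (i := i) hi₀ hone (not_le.1 hn)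
    have hmin : IsLocalMin (orderedWeight (stageBump a r Θ) n i) x :=
      .of_forall fun z => hzero.trans_le (orderedWeight_nonneg (fun _ _ _ => cutoff_nonneg)
        (fun _ _ _ => cutoff_le_one) n i z)
    rw [hmin.fderiv_eq_zero, zero_apply]

theorem IsAdaptedToBalls.isStationaryPartition (hΘ : IsAdaptedToBalls a r K Θ)
    (hK : IsBlockSystem V K ℓ) (ha : ∀ i, a i ∈ V) :
    IsStationaryPartition (⋃ i, ball (a i) (r i)) ℓ
      fun q : Σ n : ℕ, Fin (n + 1) => orderedWeight (stageBump a r Θ) q.1 q.2 := by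
  have hone : ∀ x ∈ ⋃ i, ball (a i) (r i),
      ∃ n, ∃ i ≤ n, ∀ᶠ y in 𝓝 x, stageBump a r Θ n i y = 1 := fun x hx => by
    obtain ⟨i, hi⟩ := mem_iUnion.1 hx
    obtain ⟨n, hn, hy⟩ := hΘ.exists_eventually_stageBump_eq_one hi
    exact ⟨n, i, hn, hy⟩
  refine
    { contDiff := fun q => contDiff_orderedWeight (contDiff_stageBump hΘ.contDiff) q.1 q.2
      nonneg := fun q => orderedWeight_nonneg (fun _ _ _ => cutoff_nonneg)
        (fun _ _ _ => cutoff_le_one) q.1 q.2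
      exists_finset := fun x hx => ?_
      finsum_eq_one := fun x hx => ?_
      exists_map_eq := fun x hx y => ?_ }
  all_goals obtain ⟨n, i, hi, heq⟩ := hone x hx
  · exact ⟨_, heq.mono fun y hy => support_orderedWeight_subset hi hy⟩
  · exact finsum_orderedWeight_eq_one hi heq.self_of_nhds
  · obtain ⟨h, hstat, hy⟩ :=
      hΘ.exists_orderedWeight_stationary hK ha ⟨n, i, hi, heq.self_of_nhds⟩ y
    exact ⟨h, fun q => hstat q.1 q.2 (Nat.le_of_lt_succ q.2.2), hy⟩

theorem IsAdaptedToBalls.mem_ball_of_orderedWeight_ne_zero (hΘ : IsAdaptedToBalls a r K Θ)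
    {n i : ℕ} (hi : i ≤ n) {x : X} (hx : orderedWeight (stageBump a r Θ) n i x ≠ 0) :
    x ∈ ball (a i) (r i) :=
  hΘ.mem_ball_of_stageBump_ne_zero hi (right_ne_zero_of_mul hx)

end StationaryPartition

section Blend

variable {X E κ : Type*} [NormedAddCommGroup X] [NormedSpace ℝ X] [NormedAddCommGroup E]
  [NormedSpace ℝ E]

/-- The average of the affine maps `c q + δ q • ℓ` with the weights `W q`. -/
noncomputable def blend (W : κ → X → ℝ) (c : κ → E) (δ : κ → ℝ) (ℓ : X →L[ℝ] E) (x : X) : E :=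
  ∑ᶠ q, W q x • (c q + δ q • ℓ x)

variable {O : Set X} {ℓ : X →L[ℝ] E} {W : κ → X → ℝ}

namespace IsStationaryPartition

theorem exists_blend_eventuallyEq (hW : IsStationaryPartition O ℓ W) (c : κ → E) (δ : κ → ℝ)
    {x : X} (hx : x ∈ O) :
    ∃ s : Finset κ, (support fun q => W q x) ⊆ s ∧
      blend W c δ ℓ =ᶠ[𝓝 x] fun y => ∑ q ∈ s, W q y • (c q + δ q • ℓ y) := by
  obtain ⟨s, hs⟩ := hW.exists_finset x hx
  exact ⟨s, hs.self_of_nhds, hs.mono fun y hy =>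
    finsum_eq_sum_of_support_subset _ ((support_smul_subset_left _ _).trans hy)⟩

theorem contDiffAt_blend (hW : IsStationaryPartition O ℓ W) (c : κ → E) (δ : κ → ℝ) {x : X}
    (hx : x ∈ O) : ContDiffAt ℝ ∞ (blend W c δ ℓ) x := by
  obtain ⟨s, -, hs⟩ := hW.exists_blend_eventuallyEq c δ hx
  refine ContDiffAt.congr_of_eventuallyEq (ContDiff.contDiffAt ?_) hs
  exact .sum fun q _ => (hW.contDiff q).smul
    (contDiff_const.add (contDiff_const.smul ℓ.contDiff))

theorem blend_mem (hW : IsStationaryPartition O ℓ W) {c : κ → E} {δ : κ → ℝ} {x : X}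
    (hx : x ∈ O) {S : Set E} (hS : Convex ℝ S) (hmem : ∀ q, W q x ≠ 0 → c q + δ q • ℓ x ∈ S) :
    blend W c δ ℓ x ∈ S :=
  hS.finsum_mem (fun q => hW.nonneg q x) (hW.finsum_eq_one x hx) hmem

theorem surjective_fderiv_blend (hW : IsStationaryPartition O ℓ W) (c : κ → E) {δ : κ → ℝ}
    (hδ : ∀ q, 0 < δ q) {x : X} (hx : x ∈ O) : Surjective (fderiv ℝ (blend W c δ ℓ) x) := by
  obtain ⟨s, hsupp, hs⟩ := hW.exists_blend_eventuallyEq c δ hx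
  have hpos : 0 < ∑ q ∈ s, W q x * δ q := by
    have hone := hW.finsum_eq_one x hx
    rw [finsum_eq_sum_of_support_subset _ hsupp] at hone
    obtain ⟨q, hq, hWq⟩ := Finset.exists_ne_zero_of_sum_ne_zero (hone.trans_ne one_ne_zero)
    exact Finset.sum_pos' (fun q _ => mul_nonneg (hW.nonneg q x) (hδ q).le)
      ⟨q, hq, mul_pos ((hW.nonneg q x).lt_of_ne' hWq) (hδ q)⟩
  intro y
  obtain ⟨h, hh, hy⟩ := hW.exists_map_eq x hx ((∑ q ∈ s, W q x * δ q)⁻¹ • y)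
  have hterm : ∀ q, HasFDerivAt (fun y => W q y • (c q + δ q • ℓ y))
      (W q x • δ q • ℓ + (fderiv ℝ (W q) x).smulRight (c q + δ q • ℓ x)) x := fun q =>
    (((hW.contDiff q).differentiable (by simp) x).hasFDerivAt).smul
      ((ℓ.hasFDerivAt.const_smul (δ q)).const_add (c q))
  refine ⟨h, ?_⟩
  rw [hs.fderiv_eq, (HasFDerivAt.fun_sum fun q _ => hterm q).fderiv]
  simp only [sum_apply, add_apply, smul_apply, ContinuousLinearMap.smulRight_apply, hh, zero_smul,
    add_zero, smul_smul, ← Finset.sum_smul, hy, ← Finset.sum_mul, mul_inv_cancel₀ hpos.ne',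
    one_smul]

end IsStationaryPartition

end Blend

section Cover

/-- Balls with centres in `V` and radii `r i` that cover the image of `U` under `j`, together with
affine functions of `L`, the `i`-th of which is within `ε` of `f` over the `i`-th ball. -/
structure IsAdaptedCover {X Z E : Type*} [PseudoMetricSpace Z] [NormedAddCommGroup E]
    [NormedSpace ℝ E] (j : X → Z) (V : Set Z) (U : Set X) (f : X → E) (ε : X → ℝ) (L : X → E)
    (a : ℕ → Z) (r : ℕ → ℝ) (c : ℕ → E) (δ : ℕ → ℝ) : Prop where
  center_mem : ∀ i, a i ∈ V
  radius_pos : ∀ i, 0 < r i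
  slope_pos : ∀ i, 0 < δ i
  norm_sub_le : ∀ i x, j x ∈ ball (a i) (r i) → ‖f x - (c i + δ i • L x)‖ ≤ ε x
  exists_mem_ball : ∀ x ∈ U, ∃ i, j x ∈ ball (a i) (r i)

variable {X Z E : Type*} [TopologicalSpace X] [PseudoMetricSpace Z]
  [NormedAddCommGroup E] [NormedSpace ℝ E] {j : X → Z} {V : Set Z} {U : Set X} {f L : X → E}
  {ε : X → ℝ}

theorem exists_ball_norm_sub_le (hj : Topology.IsInducing j) (hV : Dense V) (hL : Continuous L)
    {x : X} (hf : ContinuousAt f x) (hε : LowerSemicontinuousAt ε x) (hεx : 0 < ε x) :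
    ∃ a ∈ V, ∃ r > 0, ∃ δ > (0 : ℝ), j x ∈ ball a r ∧
      ∀ y, j y ∈ ball a r → ‖f y - (f x + δ • L y)‖ ≤ ε y := by
  obtain ⟨δ, hδε, hδ⟩ : ∃ δ : ℝ, δ * ‖L x‖ < ε x / 2 ∧ 0 < δ := by
    have hlim : Tendsto (fun δ : ℝ => δ * ‖L x‖) (𝓝[>] 0) (𝓝 0) :=
      tendsto_nhdsWithin_of_tendsto_nhds (Continuous.tendsto' (by fun_prop) _ _ (zero_mul _))
    exact ((hlim.eventually_lt_const (half_pos hεx)).and self_mem_nhdsWithin).exists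
  have herror : ContinuousAt (fun y => ‖f y - (f x + δ • L y)‖) x := by fun_prop
  have hlt : ‖f x - (f x + δ • L x)‖ < ε x / 2 := by
    rwa [sub_add_cancel_left, norm_neg, norm_smul, Real.norm_of_nonneg hδ.le]
  have hev : ∀ᶠ y in 𝓝 x, ‖f y - (f x + δ • L y)‖ ≤ ε y := by
    filter_upwards [herror.eventually_lt_const hlt, hε _ (half_lt_self hεx)] with y h₁ h₂
    exact (h₁.trans h₂).le
  rw [hj.nhds_eq_comap] at hev
  obtain ⟨s, hs, hball⟩ := (nhds_basis_ball.comap j).eventually_iff.1 hev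
  obtain ⟨a, haV, ha⟩ := hV.exists_dist_lt (j x) (half_pos hs)
  refine ⟨a, haV, s / 2, half_pos hs, δ, hδ, ha, fun y hy => hball ?_⟩
  exact ball_subset (by linarith [dist_comm a (j x)]) hy

theorem exists_isAdaptedCover [SecondCountableTopology X] (hj : Topology.IsInducing j)
    (hV : Dense V) (hL : Continuous L) (hU : IsOpen U) (hne : U.Nonempty) (hf : ContinuousOn f U)
    (hε : LowerSemicontinuousOn ε U) (hεpos : ∀ x ∈ U, 0 < ε x) :
    ∃ a r c δ, IsAdaptedCover j V U f ε L a r c δ := by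
  have hloc : ∀ x : U, ∃ a ∈ V, ∃ r > 0, ∃ δ > (0 : ℝ), j x ∈ ball a r ∧
      ∀ y, j y ∈ ball a r → ‖f y - (f x + δ • L y)‖ ≤ ε y := fun ⟨x, hx⟩ =>
    exists_ball_norm_sub_le hj hV hL (hf.continuousAt (hU.mem_nhds hx))
      (fun y hy => hU.nhdsWithin_eq hx ▸ hε x hx y hy) (hεpos x hx)
  choose a ha r hr δ hδ hmem happrox using hloc
  obtain ⟨T, hT, hTU⟩ := TopologicalSpace.isOpen_iUnion_countable
    (fun x : U => j ⁻¹' ball (a x) (r x)) fun x => isOpen_ball.preimage hj.continuous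
  have hcover : ∀ x ∈ U, ∃ t ∈ T, j x ∈ ball (a t) (r t) := fun x hx => by
    obtain ⟨t, ht, hxt⟩ := mem_iUnion₂.1 (hTU ▸ mem_iUnion.2 ⟨⟨x, hx⟩, hmem ⟨x, hx⟩⟩ :
      x ∈ ⋃ t ∈ T, j ⁻¹' ball (a t) (r t))
    exact ⟨t, ht, hxt⟩
  obtain ⟨e, rfl⟩ := hT.exists_eq_range (hne.elim fun x hx => (hcover x hx).imp fun _ => And.left)
  exact ⟨a ∘ e, r ∘ e, fun i => f (e i), δ ∘ e, fun i => ha _, fun i => hr _, fun i => hδ _,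
    fun i => happrox _, fun x hx => exists_range_iff.1 (hcover x hx)⟩

end Cover

theorem surjective_comp_of_denseRange {X Z E : Type*} [AddCommGroup X] [Module ℝ X]
    [TopologicalSpace Z] [AddCommGroup Z] [Module ℝ Z] [NormedAddCommGroup E] [NormedSpace ℝ E]
    [FiniteDimensional ℝ E] {T : Z →L[ℝ] E} (hT : Surjective T) {J : X →ₗ[ℝ] Z}
    (hJ : DenseRange J) : Surjective (T ∘ J) := by
  have hdense : DenseRange (T.toLinearMap ∘ₗ J) := hT.denseRange.comp hJ T.continuous
  have hclosed : IsClosed ((T.toLinearMap ∘ₗ J).range : Set E) :=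
    Submodule.closed_of_finiteDimensional _
  rw [LinearMap.coe_range] at hclosed
  exact range_eq_univ.1 (hclosed.closure_eq.symm.trans hdense.closure_range)

theorem uniform_approximation_by_smooth_maps_without_critical_points_general
    {X E : Type*} [NormedAddCommGroup X] [InnerProductSpace ℝ X]
    [TopologicalSpace.SeparableSpace X] (hX : ¬ FiniteDimensional ℝ X) [NormedAddCommGroup E]
    [NormedSpace ℝ E] [FiniteDimensional ℝ E] {U : Set X} (hU : IsOpen U) {f : X → E}
    (hf : ContinuousOn f U) {ε : X → ℝ} (hε : LowerSemicontinuousOn ε U)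
    (hεpos : ∀ x ∈ U, 0 < ε x) :
    ∃ ψ : X → E, ContDiffOn ℝ ∞ ψ U ∧ (∀ x ∈ U, ‖f x - ψ x‖ ≤ ε x) ∧
      ∀ x ∈ U, Surjective (fderiv ℝ ψ x) := by
  rcases U.eq_empty_or_nonempty with rfl | hne
  · exact ⟨0, by simp⟩
  have := UniformSpace.secondCountable_of_separable X
  let J : X →L[ℝ] UniformSpace.Completion X := UniformSpace.Completion.toComplL
  obtain ⟨V, K, ℓ, hV, hK⟩ := exists_isBlockSystem (X := UniformSpace.Completion X) (E := E)
    fun _ => hX (.of_injective J.toLinearMap (UniformSpace.Completion.coe_injective X))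
  obtain ⟨a, r, c, δ, hcover⟩ := exists_isAdaptedCover
    (UniformSpace.Completion.isUniformInducing_coe X).isInducing hV
    (ℓ.continuous.comp J.continuous) hU hne hf hε hεpos
  obtain ⟨K', Θ, hK', hΘ⟩ := hK.exists_isAdaptedToBalls hcover.center_mem hcover.radius_pos
  have hW := hΘ.isStationaryPartition hK' hcover.center_mem
  have hmem : ∀ x ∈ U, J x ∈ ⋃ i, ball (a i) (r i) := fun x hx =>
    mem_iUnion.2 (hcover.exists_mem_ball x hx)
  have hψ := fun x hx => hW.contDiffAt_blend (fun q => c q.2) (fun q => δ q.2) (hmem x hx)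
  refine ⟨_, fun x hx => ((hψ x hx).comp x J.contDiff.contDiffAt).contDiffWithinAt,
    fun x hx => ?_, fun x hx => ?_⟩
  · have hball := hW.blend_mem (hmem x hx) (convex_closedBall (f x) (ε x)) fun q hq =>
      mem_closedBall_iff_norm'.2 (hcover.norm_sub_le q.2 x
        (hΘ.mem_ball_of_orderedWeight_ne_zero (Nat.le_of_lt_succ q.2.2) hq))
    exact mem_closedBall_iff_norm'.1 hball
  · rw [((hψ x hx).differentiableAt (by simp)).hasFDerivAt.comp x J.hasFDerivAt |>.fderiv]
    exact surjective_comp_of_denseRange (J := J.toLinearMap) (hW.surjective_fderiv_blend _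
      (fun q => hcover.slope_pos q.2) (hmem x hx)) UniformSpace.Completion.denseRange_coe

/-- Every continuous mapping from an open subset `U` of a separable infinite-dimensional
real Hilbert space into `ℝ^m` can be uniformly approximated (with continuous positive
error `ε`) by `C^∞` mappings with no critical points on `U`. -/
theorem uniform_approximation_by_smooth_maps_without_critical_points
    {X : Type*} [NormedAddCommGroup X] [InnerProductSpace ℝ X] [CompleteSpace X]
    [TopologicalSpace.SeparableSpace X] (hX : ¬ FiniteDimensional ℝ X)
    (m : ℕ) (U : Set X) (hU : IsOpen U)
    (f : X → EuclideanSpace ℝ (Fin m)) (hf : ContinuousOn f U)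
    (ε : X → ℝ) (hε : ContinuousOn ε U) (hεpos : ∀ x ∈ U, 0 < ε x) :
    ∃ ψ : X → EuclideanSpace ℝ (Fin m),
      ContDiffOn ℝ (⊤ : ℕ∞) ψ U ∧
      (∀ x ∈ U, ‖f x - ψ x‖ ≤ ε x) ∧
      (∀ x ∈ U, Function.Surjective (fderiv ℝ ψ x)) :=
  uniform_approximation_by_smooth_maps_without_critical_points_general hX hU hf
    hε.lowerSemicontinuousOn hεpos
end

section
/- Let U be an open subset of a separable infinite-dimensional real Hilbert space X, let f : U → ℝ^m be a continuous mapping, and let ε : U → (0,∞) be a continuous positive function. Then there exists a C^∞ smooth mapping φ : U → ℝ^m such that: (a) the set C_φ of critical points of φ is locally compact and closed relative to U; and (b) ‖φ(x) − f(x)‖ ≤ ε(x)/2 for all x ∈ U. -/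
/-!
Choose countably many centres `cₙ ∈ U` and radii `rₙ` such that the balls `B(cₙ, rₙ)` cover `U` and
`f`, `ε` are almost constant on `B(cₙ, 2rₙ)`. Let `hₙ` be a smooth function of `‖x - cₙ‖²` that is
`1` on `B(cₙ, rₙ)` and `0` off `B(cₙ, 2rₙ)`. Then `ψₙ = hₙ ∏_{j<n} (1 - hⱼ)` is a partition of unity
on `U` and, because the bumps are radial, `∇ψₙ(x) ∈ span {x, c₀, …, cₙ}`.

An infinite-dimensional Banach space is not spanned by countably many vectors, even up to finite
dimension. Applied to the dual of `X`, this gives `T : X → Y` such that no functional `g ∘ T` with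
`g ≠ 0` is of the form `⟪u, ·⟫` with `u` in the span of the centres. Put
`φ = ∑ ψₙ (f(cₙ) + δₙ T)` with small `δₙ > 0`.

On `B(c_N, r_N)` only `ψ₀, …, ψ_N` contribute, so with `V = span {c₀, …, c_N}` we have
`dφ(x) w = η(x) T w`, `η(x) > 0`, for `w` orthogonal to `V` and `x`. If `dφ(x)` is not surjective,
some `g ∘ T` with `g ≠ 0` vanishes on these `w`, that is, `g ∘ T = ⟪u + t x, ·⟫` with `u ∈ V`. The
choice of `T` forces `t ≠ 0`, so `x` lies in a finite-dimensional space depending only on `N`. Thus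
the critical set is locally contained in finite-dimensional spaces; it is relatively closed because
surjectivity is an open condition.
-/

open Metric Set
open Filter Topology Module

section Baire

variable {𝕜 E : Type*} [NontriviallyNormedField 𝕜] [CompleteSpace 𝕜] [AddCommGroup E] [Module 𝕜 E]
  [TopologicalSpace E] [IsTopologicalAddGroup E] [ContinuousSMul 𝕜 E] [T2Space E] [BaireSpace E]

theorem finiteDimensional_of_rank_le_aleph0 (h : Module.rank 𝕜 E ≤ Cardinal.aleph0) :
    FiniteDimensional 𝕜 E := by
  let b := Basis.ofVectorSpace 𝕜 E
  have : Countable (Basis.ofVectorSpaceIndex 𝕜 E) := by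
    rwa [← Cardinal.mk_le_aleph0_iff, b.mk_eq_rank'']
  let F (t : Finset (Basis.ofVectorSpaceIndex 𝕜 E)) : Submodule 𝕜 E := Submodule.span 𝕜 (b '' t)
  have hF (t) : FiniteDimensional 𝕜 (F t) :=
    FiniteDimensional.span_of_finite 𝕜 (t.finite_toSet.image b)
  have hclosed (t) : IsClosed (F t : Set E) := (F t).closed_of_finiteDimensional
  have hunion : ⋃ t, (F t : Set E) = univ :=
    eq_univ_of_forall fun x => mem_iUnion.2 ⟨_, b.mem_span_repr_support x⟩
  obtain ⟨t, ht⟩ := nonempty_interior_of_iUnion_of_closed hclosed hunion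
  have htop : F t = ⊤ := (F t).eq_top_of_nonempty_interior' ht
  exact (htop ▸ hF t : FiniteDimensional 𝕜 (⊤ : Submodule 𝕜 E)).of_surjective
    (⊤ : Submodule 𝕜 E).subtype fun x => ⟨⟨x, trivial⟩, rfl⟩

theorem not_finiteDimensional_quotient_span_of_countable
    (hE : ¬ FiniteDimensional 𝕜 E) {s : Set E} (hs : s.Countable) :
    ¬ FiniteDimensional 𝕜 (E ⧸ Submodule.span 𝕜 s) := by
  intro hfin
  refine hE (finiteDimensional_of_rank_le_aleph0 (𝕜 := 𝕜) ?_)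
  rw [← Submodule.rank_quotient_add_rank (Submodule.span 𝕜 s)]
  exact Cardinal.add_le_aleph0.2
    ⟨(rank_lt_aleph0 𝕜 _).le, (rank_span_le s).trans (Cardinal.mk_le_aleph0_iff.2 hs)⟩

theorem exists_linearIndependent_mkQ_span_of_countable
    (hE : ¬ FiniteDimensional 𝕜 E) {s : Set E} (hs : s.Countable) (n : ℕ) :
    ∃ v : Fin n → E, LinearIndependent 𝕜 ((Submodule.span 𝕜 s).mkQ ∘ v) := by
  have hrank : Cardinal.aleph0 ≤ Module.rank 𝕜 (E ⧸ Submodule.span 𝕜 s) :=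
    not_lt.1 fun h => not_finiteDimensional_quotient_span_of_countable hE hs
      (rank_lt_aleph0_iff.1 h)
  obtain ⟨w, hw⟩ := exists_linearIndependent_of_le_rank (Cardinal.natCast_le_aleph0.trans hrank)
  obtain ⟨v, rfl⟩ := (Submodule.mkQ_surjective (Submodule.span 𝕜 s)).comp_left w
  exact ⟨v, hw⟩

end Baire

section Dual

variable {𝕜 : Type*} [RCLike 𝕜]

theorem finiteDimensional_of_strongDual {X : Type*} [NormedAddCommGroup X]
    [NormedSpace 𝕜 X] [FiniteDimensional 𝕜 (StrongDual 𝕜 X)] : FiniteDimensional 𝕜 X :=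
  FiniteDimensional.of_injective (V₂ := StrongDual 𝕜 (StrongDual 𝕜 X))
    (NormedSpace.inclusionInDoubleDualLi 𝕜).toLinearMap
    (NormedSpace.inclusionInDoubleDualLi 𝕜).injective

theorem exists_forall_ne_zero_comp_notMem_span {X Y : Type*}
    [NormedAddCommGroup X] [NormedSpace 𝕜 X] (hX : ¬ FiniteDimensional 𝕜 X)
    [NormedAddCommGroup Y] [NormedSpace 𝕜 Y] [FiniteDimensional 𝕜 Y]
    {Λ : Set (StrongDual 𝕜 X)} (hΛ : Λ.Countable) :
    ∃ T : X →L[𝕜] Y, ∀ g : StrongDual 𝕜 Y, g ≠ 0 → g ∘L T ∉ Submodule.span 𝕜 Λ := by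
  let b := finBasis 𝕜 Y
  have hdual : ¬ FiniteDimensional 𝕜 (StrongDual 𝕜 X) := fun _ => hX finiteDimensional_of_strongDual
  obtain ⟨l, hl⟩ := exists_linearIndependent_mkQ_span_of_countable hdual hΛ (finrank 𝕜 Y)
  refine ⟨∑ i, (l i).smulRight (b i), fun g hg0 hg => hg0 ?_⟩
  have hcomp : g ∘L (∑ i, (l i).smulRight (b i)) = ∑ i, g (b i) • l i := by
    ext x
    simp [mul_comm]
  have hzero : ∑ i, g (b i) • (Submodule.span 𝕜 Λ).mkQ (l i) = 0 := by
    simp only [← map_smul, ← map_sum, ← hcomp]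
    exact (Submodule.Quotient.mk_eq_zero _).2 hg
  exact ContinuousLinearMap.coe_injective
    (b.ext (Fintype.linearIndependent_iff.1 hl (fun i => g (b i)) hzero))

end Dual

section Duality

theorem exists_mem_innerSL_eq_of_orthogonal_le_ker {𝕜 X : Type*} [RCLike 𝕜]
    [NormedAddCommGroup X] [InnerProductSpace 𝕜 X] {S : Submodule 𝕜 X} [CompleteSpace S]
    {l : StrongDual 𝕜 X} (h : Sᗮ ≤ l.toLinearMap.ker) :
    ∃ s ∈ S, innerSL 𝕜 s = l := by
  obtain ⟨s, hs⟩ := (InnerProductSpace.toDual 𝕜 S).surjective (l ∘L S.subtypeL)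
  refine ⟨s, s.2, ?_⟩
  ext x
  obtain ⟨y, hy, z, hz, rfl⟩ := S.exists_add_mem_mem_orthogonal x
  have hly : inner 𝕜 (s : X) y = l y := congr($hs ⟨y, hy⟩)
  have hlz : l z = 0 := h hz
  simp [hly, hlz, hz s s.2, inner_add_right]

variable {X Y : Type*} [NormedAddCommGroup X] [InnerProductSpace ℝ X]
  [NormedAddCommGroup Y] [NormedSpace ℝ Y]

/-- The subspace of all `u` such that `⟪u, ·⟫ = g ∘ T` for some functional `g`. If `X` is complete,
this is the range of the adjoint of `T`; the definition needs no completeness. -/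
noncomputable def adjointRange (T : X →L[ℝ] Y) : Submodule ℝ X :=
  (T.precomp ℝ).range.comap (innerSL ℝ).toLinearMap

theorem mem_adjointRange {T : X →L[ℝ] Y} {u : X} :
    u ∈ adjointRange T ↔ ∃ g : StrongDual ℝ Y, g ∘L T = innerSL ℝ u := Iff.rfl

instance finiteDimensional_adjointRange [FiniteDimensional ℝ Y] (T : X →L[ℝ] Y) :
    FiniteDimensional ℝ (adjointRange T) :=
  have hker : (innerSL ℝ (E := X)).toLinearMap.ker = ⊥ :=
    LinearMap.ker_eq_bot.2 (InnerProductSpace.toDualMap ℝ X).injective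
  have : FiniteDimensional ℝ (innerSL ℝ (E := X)).toLinearMap.ker := hker ▸ inferInstance
  inferInstanceAs (FiniteDimensional ℝ ((T.precomp ℝ).range.comap (innerSL ℝ).toLinearMap))

theorem surjOn_orthogonal_sup_span_singleton [FiniteDimensional ℝ Y] {T : X →L[ℝ] Y}
    {V : Submodule ℝ X} [FiniteDimensional ℝ V]
    (hT : ∀ g : StrongDual ℝ Y, g ≠ 0 → g ∘L T ∉ V.map (innerSL ℝ).toLinearMap)
    {x : X} (hx : x ∉ V ⊔ adjointRange T) : SurjOn T ((V ⊔ ℝ ∙ x)ᗮ) univ := by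
  by_contra hsurj
  have hlt : (V ⊔ ℝ ∙ x)ᗮ.map T.toLinearMap < ⊤ :=
    lt_top_iff_ne_top.2 fun h => hsurj fun y _ => h.ge (Submodule.mem_top (x := y))
  obtain ⟨g, hg0, hg⟩ := Submodule.exists_le_ker_of_lt_top _ hlt
  let g' : StrongDual ℝ Y := LinearMap.toContinuousLinearMap g
  obtain ⟨s, hs, hsg⟩ := exists_mem_innerSL_eq_of_orthogonal_le_ker (S := V ⊔ ℝ ∙ x)
    (l := g' ∘L T) fun w hw => hg (Submodule.mem_map_of_mem hw)
  obtain ⟨u, hu, z, hz, rfl⟩ := Submodule.mem_sup.1 hs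
  obtain ⟨t, rfl⟩ := Submodule.mem_span_singleton.1 hz
  rcases eq_or_ne t 0 with rfl | ht
  · exact hT g' (fun h => hg0 (congrArg ContinuousLinearMap.toLinearMap h))
      ⟨u, hu, by simpa using hsg⟩
  · have htx : t • x = -u + (u + t • x) := (neg_add_cancel_left u _).symm
    refine hx ((Submodule.smul_mem_iff _ ht).1 (htx ▸ add_mem (Submodule.mem_sup_left (neg_mem hu))
      (Submodule.mem_sup_right (mem_adjointRange.2 ⟨g', hsg.symm⟩))))

theorem exists_clm_surjOn_orthogonal [FiniteDimensional ℝ Y] {s : Set X} (hs : s.Countable) :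
    ∃ T : X →L[ℝ] Y, ∀ V ≤ Submodule.span ℝ s, FiniteDimensional ℝ V →
      ∃ W : Submodule ℝ X, FiniteDimensional ℝ W ∧ ∀ x ∉ W, SurjOn T ((V ⊔ ℝ ∙ x)ᗮ) univ := by
  by_cases hX : FiniteDimensional ℝ X
  · exact ⟨0, fun _ _ _ => ⟨⊤, inferInstance, fun x hx => (hx trivial).elim⟩⟩
  obtain ⟨T, hT⟩ := exists_forall_ne_zero_comp_notMem_span (Y := Y) hX (hs.image (innerSL ℝ))
  refine ⟨T, fun V hV _ => ⟨V ⊔ adjointRange T, inferInstance, fun x hx =>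
    surjOn_orthogonal_sup_span_singleton (fun g hg0 hg => hT g hg0 ?_) hx⟩⟩
  exact Submodule.map_span (innerSL ℝ).toLinearMap s ▸ Submodule.map_mono hV hg

end Duality

section CriticalSet

theorem isOpen_setOf_surjective {𝕜 X Y : Type*}
    [NontriviallyNormedField 𝕜] [CompleteSpace 𝕜]
    [NormedAddCommGroup X] [NormedSpace 𝕜 X] [NormedAddCommGroup Y] [NormedSpace 𝕜 Y]
    [FiniteDimensional 𝕜 Y] : IsOpen {L : X →L[𝕜] Y | Function.Surjective L} := by
  convert isOpen_setOfPred_nat_le_rank (𝕜 := 𝕜) (E := X) (F := Y) (finrank 𝕜 Y) using 1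
  ext L
  rw [mem_ofPred_eq, mem_ofPred_eq, LinearMap.rank, ← finrank_eq_rank, Nat.cast_le]
  change Function.Surjective L.toLinearMap ↔ _
  rw [← LinearMap.range_eq_top]
  exact ⟨fun h => by rw [h, finrank_top], fun h =>
    Submodule.eq_top_of_finrank_eq (le_antisymm (Submodule.finrank_le _) h)⟩

variable {X Y : Type*} [NormedAddCommGroup X] [NormedSpace ℝ X]
  [NormedAddCommGroup Y] [NormedSpace ℝ Y]

/-- The set `C_φ` of critical points of `φ` in `U`. Where `φ` is not differentiable, `fderiv` takes
the junk value `0`, so such points count as critical unless `Y` is trivial. -/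
def criticalSet (φ : X → Y) (U : Set X) : Set X :=
  {x ∈ U | ¬ Function.Surjective (fderiv ℝ φ x)}

theorem exists_isClosed_criticalSet_eq_inter [FiniteDimensional ℝ Y] {φ : X → Y} {U : Set X}
    (hU : IsOpen U) (hφ : ContDiffOn ℝ 1 φ U) :
    ∃ F, IsClosed F ∧ criticalSet φ U = F ∩ U := by
  have hopen : IsOpen (U ∩ fderiv ℝ φ ⁻¹' {L | Function.Surjective L}) :=
    (hφ.continuousOn_fderiv_of_isOpen hU le_rfl).isOpen_inter_preimage hU isOpen_setOf_surjective
  refine ⟨_, hopen.isClosed_compl, ?_⟩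
  ext x
  simp only [criticalSet, mem_ofPred_eq, mem_inter_iff, mem_compl_iff, mem_preimage]
  tauto

theorem isCompact_of_subset_finiteDimensional {s : Set X} (hs : IsClosed s)
    (hb : Bornology.IsBounded s) {W : Submodule ℝ X} [FiniteDimensional ℝ W] (hsW : s ⊆ W) :
    IsCompact s := by
  have : ProperSpace W := FiniteDimensional.proper ℝ W
  have hpre : IsCompact ((↑) ⁻¹' s : Set W) :=
    isCompact_of_isClosed_isBounded (hs.preimage continuous_subtype_val)
      (W.subtypeₗᵢ.antilipschitz.isBounded_preimage hb)
  have himage : (↑) '' ((↑) ⁻¹' s : Set W) = s :=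
    image_preimage_eq_of_subset (Subtype.range_coe.symm ▸ hsW)
  exact himage ▸ hpre.image continuous_subtype_val

theorem exists_isCompact_subset_mem_nhdsWithin {C F U : Set X} (hF : IsClosed F) (hU : IsOpen U)
    (hC : C = F ∩ U) {x : X} (hx : x ∈ C) {W : Submodule ℝ X} [FiniteDimensional ℝ W]
    (hW : ∀ᶠ y in 𝓝[C] x, y ∈ W) : ∃ K, IsCompact K ∧ K ⊆ C ∧ K ∈ 𝓝[C] x := by
  have hxU : U ∈ 𝓝 x := hU.mem_nhds (hC ▸ hx).2
  obtain ⟨s, hs, hsub⟩ := nhds_basis_closedBall.mem_iff.1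
    (inter_mem hxU (eventually_nhdsWithin_iff.1 hW))
  have hclosed : C ∩ closedBall x s = F ∩ closedBall x s := by
    rw [hC, inter_assoc, inter_eq_right.2 fun y hy => (hsub hy).1]
  refine ⟨C ∩ closedBall x s, ?_, inter_subset_left,
    inter_mem_nhdsWithin C (closedBall_mem_nhds x hs)⟩
  refine isCompact_of_subset_finiteDimensional (W := W)
    (hclosed ▸ hF.inter isClosed_closedBall) (isBounded_closedBall.subset inter_subset_right) ?_
  exact fun y hy => (hsub hy.2).2 hy.1

end CriticalSet

section BallBlend

section Weights

variable {X : Type*} [NormedAddCommGroup X]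

/-- A smooth function of `‖x - c‖ ^ 2` which, for `0 < r`, is `1` on `ball c r` and vanishes off
`ball c (2 * r)`. Unlike `ContDiffBump`, whose profile is not specified, it is radial on every inner
product space, which confines its gradient at `x` to the line spanned by `x - c`. -/
noncomputable def ballBump (c : X) (r : ℝ) (x : X) : ℝ :=
  Real.smoothTransition (2 - ‖x - c‖ ^ 2 / r ^ 2)

/-- The product `∏_{j<n} (1 - hⱼ)` of the complementary bumps; it vanishes on the first `n` balls
of the family. -/
noncomputable def ballCobump (c : ℕ → X) (r : ℕ → ℝ) (n : ℕ) (x : X) : ℝ :=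
  ∏ j ∈ Finset.range n, (1 - ballBump (c j) (r j) x)

/-- The partition of unity `ψₙ = hₙ ∏_{j<n} (1 - hⱼ)` on the union of the balls, where `hₙ` is the
bump of the `n`-th ball. -/
noncomputable def ballWeight (c : ℕ → X) (r : ℕ → ℝ) (n : ℕ) (x : X) : ℝ :=
  ballBump (c n) (r n) x * ballCobump c r n x

section Bump

variable {c x : X} {r : ℝ}

theorem ballBump_nonneg : 0 ≤ ballBump c r x := Real.smoothTransition.nonneg _

theorem ballBump_le_one : ballBump c r x ≤ 1 := Real.smoothTransition.le_one _

theorem ballBump_eq_one (hx : x ∈ ball c r) : ballBump c r x = 1 := by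
  have hr : 0 < r := pos_of_mem_ball hx
  rw [mem_ball_iff_norm] at hx
  have hquot : ‖x - c‖ ^ 2 / r ^ 2 ≤ 1 := by
    rw [div_le_one (by positivity)]
    gcongr
  exact Real.smoothTransition.one_of_one_le (by linarith)

theorem mem_ball_of_ballBump_ne_zero (hr : 0 < r) (hx : ballBump c r x ≠ 0) :
    x ∈ ball c (2 * r) := by
  contrapose! hx
  rw [mem_ball_iff_norm, not_lt] at hx
  have hquot : 2 ≤ ‖x - c‖ ^ 2 / r ^ 2 := by
    rw [le_div_iff₀ (by positivity)]
    calc 2 * r ^ 2 ≤ (2 * r) ^ 2 := by nlinarith [sq_nonneg r]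
      _ ≤ ‖x - c‖ ^ 2 := by gcongr
  exact Real.smoothTransition.zero_of_nonpos (by linarith)

end Bump

variable {c : ℕ → X} {r : ℕ → ℝ} {x : X} {N n : ℕ}

theorem ballCobump_nonneg : 0 ≤ ballCobump c r n x :=
  Finset.prod_nonneg fun _ _ => sub_nonneg.2 ballBump_le_one

theorem ballCobump_eq_zero (hx : x ∈ ball (c N) (r N)) (hn : N < n) : ballCobump c r n x = 0 :=
  Finset.prod_eq_zero (Finset.mem_range.2 hn) (by rw [ballBump_eq_one hx, sub_self])

theorem ballWeight_eq_sub : ballWeight c r n = ballCobump c r n - ballCobump c r (n + 1) := by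
  ext x
  simp only [ballWeight, ballCobump, Pi.sub_apply, Finset.prod_range_succ]
  ring

theorem ballWeight_nonneg : 0 ≤ ballWeight c r n x :=
  mul_nonneg ballBump_nonneg ballCobump_nonneg

theorem mem_ball_of_ballWeight_ne_zero (hr : 0 < r n) (hx : ballWeight c r n x ≠ 0) :
    x ∈ ball (c n) (2 * r n) :=
  mem_ball_of_ballBump_ne_zero hr (left_ne_zero_of_mul hx)

theorem ballWeight_eq_zero (hx : x ∈ ball (c N) (r N)) (hn : N < n) : ballWeight c r n x = 0 := by
  rw [ballWeight, ballCobump_eq_zero hx hn, mul_zero]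

theorem sum_ballWeight_eq_one (hx : x ∈ ball (c N) (r N)) :
    ∑ n ∈ Finset.range (N + 1), ballWeight c r n x = 1 := by
  simp only [ballWeight_eq_sub, Pi.sub_apply]
  rw [Finset.sum_range_sub', ballCobump_eq_zero hx N.lt_succ_self, sub_zero]
  exact Finset.prod_range_zero _

variable {Y : Type*} [NormedAddCommGroup Y] [NormedSpace ℝ Y] {a : ℕ → Y}

/-- The blend `∑ₙ ψₙ aₙ` of the constants `aₙ` by the weights of the balls. The sum is finite on
the union of the balls; elsewhere `finsum` may take the junk value `0`. -/
noncomputable def ballBlend (c : ℕ → X) (r : ℕ → ℝ) (a : ℕ → Y) (x : X) : Y :=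
  ∑ᶠ n, ballWeight c r n x • a n

theorem ballBlend_eq_sum (hx : x ∈ ball (c N) (r N)) :
    ballBlend c r a x = ∑ n ∈ Finset.range (N + 1), ballWeight c r n x • a n := by
  refine finsum_eq_sum_of_support_subset _ fun n hn => ?_
  contrapose! hn
  have hlt : N < n := by simpa using hn
  simp [ballWeight_eq_zero hx hlt]

theorem ballBlend_eventuallyEq_sum (hx : x ∈ ball (c N) (r N)) :
    ballBlend c r a =ᶠ[𝓝 x] fun y => ∑ n ∈ Finset.range (N + 1), ballWeight c r n y • a n := by
  filter_upwards [isOpen_ball.mem_nhds hx] with y hy using ballBlend_eq_sum hy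

theorem ballBlend_mem {s : Set Y} (hs : Convex ℝ s) (hx : x ∈ ball (c N) (r N))
    (ha : ∀ n, ballWeight c r n x ≠ 0 → a n ∈ s) : ballBlend c r a x ∈ s := by
  refine hs.finsum_mem (fun _ => ballWeight_nonneg) ?_ ha
  rw [← sum_ballWeight_eq_one hx]
  simpa [ballBlend] using ballBlend_eq_sum (a := fun _ => (1 : ℝ)) hx

theorem ballBlend_pos {δ : ℕ → ℝ} (hx : x ∈ ball (c N) (r N)) (hδ : ∀ n, 0 < δ n) :
    0 < ballBlend c r δ x :=
  ballBlend_mem (convex_Ioi 0) hx fun n _ => hδ n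

end Weights

section Smooth

variable {X : Type*} [NormedAddCommGroup X] [InnerProductSpace ℝ X]

theorem contDiff_ballBump {c : X} {r : ℝ} : ContDiff ℝ (⊤ : ℕ∞) (ballBump c r) :=
  Real.smoothTransition.contDiff.comp
    (contDiff_const.sub (((contDiff_id.sub contDiff_const).norm_sq ℝ).div_const _))

theorem fderiv_ballBump_apply_eq_zero {c x w : X} {r : ℝ} (hw : inner ℝ (x - c) w = 0) :
    fderiv ℝ (ballBump c r) x w = 0 := by
  have hinner : HasFDerivAt (fun y : X => 2 - ‖y - c‖ ^ 2 / r ^ 2) _ x :=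
    ((((hasFDerivAt_id x).sub_const c).norm_sq).mul_const ((r ^ 2)⁻¹)).const_sub 2
  have houter : HasDerivAt Real.smoothTransition _ (2 - ‖x - c‖ ^ 2 / r ^ 2) :=
    (Real.smoothTransition.contDiff (n := 1)).differentiable_one.differentiableAt.hasDerivAt
  have hcomp : HasFDerivAt (ballBump c r) _ x := houter.comp_hasFDerivAt x hinner
  rw [hcomp.fderiv]
  simp [hw, -map_sub]

variable {c : ℕ → X} {r : ℕ → ℝ} {x : X} {N n : ℕ}

theorem contDiff_ballCobump : ContDiff ℝ (⊤ : ℕ∞) (ballCobump c r n) :=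
  contDiff_prod fun _ _ => contDiff_const.sub contDiff_ballBump

theorem fderiv_ballCobump_apply_eq_zero {w : X} (hw : ∀ j < n, inner ℝ (x - c j) w = 0) :
    fderiv ℝ (ballCobump c r n) x w = 0 := by
  have hdiff (j) : DifferentiableAt ℝ (fun y => 1 - ballBump (c j) (r j) y) x :=
    (contDiff_const.sub contDiff_ballBump).differentiable (by simp) x
  have hfactor : ∀ j ∈ Finset.range n, fderiv ℝ (fun y => 1 - ballBump (c j) (r j) y) x w = 0 :=
    fun j hj => by
      simp [fderiv_const_sub, fderiv_ballBump_apply_eq_zero (hw j (Finset.mem_range.1 hj))]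
  change fderiv ℝ (fun y => ∏ j ∈ Finset.range n, (1 - ballBump (c j) (r j) y)) x w = 0
  rw [fderiv_finsetProd fun j _ => hdiff j, sum_apply]
  exact Finset.sum_eq_zero fun j hj => by simp [hfactor j hj]

theorem contDiff_ballWeight : ContDiff ℝ (⊤ : ℕ∞) (ballWeight c r n) :=
  contDiff_ballBump.mul contDiff_ballCobump

theorem fderiv_ballWeight_apply_eq_zero {w : X} (hw : ∀ j ≤ n, inner ℝ (x - c j) w = 0) :
    fderiv ℝ (ballWeight c r n) x w = 0 := by
  have hdiff (k) : DifferentiableAt ℝ (ballCobump c r k) x :=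
    contDiff_ballCobump.differentiable (by simp) x
  rw [ballWeight_eq_sub, fderiv_sub (hdiff n) (hdiff (n + 1))]
  simp [fderiv_ballCobump_apply_eq_zero fun j hj => hw j (le_of_lt hj),
    fderiv_ballCobump_apply_eq_zero fun j hj => hw j (Nat.lt_succ_iff.1 hj)]

variable {Y : Type*} [NormedAddCommGroup Y] [NormedSpace ℝ Y] {a : ℕ → Y}

theorem contDiffAt_ballBlend (hx : x ∈ ball (c N) (r N)) :
    ContDiffAt ℝ (⊤ : ℕ∞) (ballBlend c r a) x :=
  (ContDiff.sum fun _ _ => contDiff_ballWeight.smul contDiff_const).contDiffAt.congr_of_eventuallyEq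
    (ballBlend_eventuallyEq_sum hx)

theorem fderiv_ballBlend_apply_eq_zero {w : X} (hx : x ∈ ball (c N) (r N))
    (hw : ∀ j ≤ N, inner ℝ (x - c j) w = 0) : fderiv ℝ (ballBlend c r a) x w = 0 := by
  have hdiff (n) : DifferentiableAt ℝ (ballWeight c r n) x :=
    contDiff_ballWeight.differentiable (by simp) x
  rw [(ballBlend_eventuallyEq_sum hx).fderiv_eq,
    fderiv_fun_sum fun n _ => (hdiff n).smul_const (a n), sum_apply]
  refine Finset.sum_eq_zero fun n hn => ?_
  have hweight : fderiv ℝ (ballWeight c r n) x w = 0 := fderiv_ballWeight_apply_eq_zero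
    fun j hj => hw j (hj.trans (Nat.lt_succ_iff.1 (Finset.mem_range.1 hn)))
  rw [fderiv_smul_const (hdiff n)]
  simp [hweight]

/-- The blend of the affine maps `x ↦ aₙ + δₙ T x`: the `aₙ` provide the approximation, and the
small multiples of `T` the rank of the derivative. -/
noncomputable def affineBlend (c : ℕ → X) (r : ℕ → ℝ) (a : ℕ → Y) (δ : ℕ → ℝ) (T : X →L[ℝ] Y)
    (x : X) : Y :=
  ballBlend c r a x + ballBlend c r δ x • T x

variable {δ : ℕ → ℝ} {T : X →L[ℝ] Y}

theorem contDiffAt_affineBlend (hx : x ∈ ball (c N) (r N)) :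
    ContDiffAt ℝ (⊤ : ℕ∞) (affineBlend c r a δ T) x :=
  (contDiffAt_ballBlend hx).add ((contDiffAt_ballBlend hx).smul T.contDiff.contDiffAt)

theorem fderiv_affineBlend_apply {w : X} (hx : x ∈ ball (c N) (r N))
    (hw : ∀ j ≤ N, inner ℝ (x - c j) w = 0) :
    fderiv ℝ (affineBlend c r a δ T) x w = ballBlend c r δ x • T w := by
  have ha : DifferentiableAt ℝ (ballBlend c r a) x :=
    (contDiffAt_ballBlend hx).differentiableAt (by simp)
  have hδ : DifferentiableAt ℝ (ballBlend c r δ) x :=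
    (contDiffAt_ballBlend hx).differentiableAt (by simp)
  have hderiv : HasFDerivAt (affineBlend c r a δ T) _ x :=
    ha.hasFDerivAt.add (hδ.hasFDerivAt.smul T.hasFDerivAt)
  rw [hderiv.fderiv]
  simp [fderiv_ballBlend_apply_eq_zero hx hw]

theorem surjective_fderiv_affineBlend (hδ : ∀ n, 0 < δ n) (hx : x ∈ ball (c N) (r N))
    (hT : SurjOn T ((Submodule.span ℝ (c '' Iic N) ⊔ ℝ ∙ x)ᗮ) univ) :
    Function.Surjective (fderiv ℝ (affineBlend c r a δ T) x) := by
  intro y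
  obtain ⟨w, hw, hwy⟩ := hT (mem_univ ((ballBlend c r δ x)⁻¹ • y))
  have horth : ∀ j ≤ N, inner ℝ (x - c j) w = 0 := fun j hj => hw _ <|
    sub_mem (Submodule.mem_sup_right (Submodule.mem_span_singleton_self x))
      (Submodule.mem_sup_left (Submodule.subset_span (mem_image_of_mem c hj)))
  refine ⟨w, ?_⟩
  rw [fderiv_affineBlend_apply hx horth, hwy, smul_inv_smul₀ (ballBlend_pos hx hδ).ne']

theorem norm_affineBlend_sub_le (hr : ∀ n, 0 < r n) (hx : x ∈ ball (c N) (r N)) {y : Y} {e : ℝ}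
    (ha : ∀ n, x ∈ ball (c n) (2 * r n) → ‖a n + δ n • T x - y‖ ≤ e) :
    ‖affineBlend c r a δ T x - y‖ ≤ e := by
  have hblend : affineBlend c r a δ T x = ballBlend c r (fun n => a n + δ n • T x) x := by
    simp only [affineBlend, ballBlend_eq_sum hx, smul_add, Finset.sum_add_distrib, Finset.sum_smul,
      smul_assoc]
  rw [hblend, ← mem_closedBall_iff_norm]
  exact ballBlend_mem (convex_closedBall y e) hx fun n hn =>
    mem_closedBall_iff_norm.2 (ha n (mem_ball_of_ballWeight_ne_zero (hr n) hn))

end Smooth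

end BallBlend

section Cover

theorem exists_seq_subset_iUnion_ball {X : Type*} [PseudoMetricSpace X]
    [TopologicalSpace.SeparableSpace X] {U : Set X} (hU : U.Nonempty) {ρ : X → ℝ}
    (hρ : ∀ x ∈ U, 0 < ρ x) :
    ∃ c : ℕ → X, (∀ n, c n ∈ U) ∧ U ⊆ ⋃ n, ball (c n) (ρ (c n)) := by
  have : SecondCountableTopology X := UniformSpace.secondCountable_of_separable X
  obtain ⟨t, htU, htc, hcov⟩ := TopologicalSpace.countable_cover_nhdsWithin (s := U)
    fun x hx => mem_nhdsWithin_of_mem_nhds (ball_mem_nhds x (hρ x hx))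
  have ht : t.Nonempty := by
    obtain ⟨y, hy, -⟩ := mem_iUnion₂.1 (hcov hU.some_mem)
    exact ⟨y, hy⟩
  obtain ⟨c, rfl⟩ := htc.exists_eq_range ht
  exact ⟨c, fun n => htU ⟨n, rfl⟩, by simpa only [biUnion_range] using hcov⟩

theorem exists_ball_dist_add_half_lt {X Y : Type*} [PseudoMetricSpace X]
    [PseudoMetricSpace Y] {f : X → Y} {ε : X → ℝ} {x : X} (hf : ContinuousAt f x)
    (hε : ContinuousAt ε x) (hx : 0 < ε x) :
    ∃ ρ > 0, ∀ y ∈ ball x ρ, dist (f x) (f y) + ε x / 2 < ε y :=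
  Metric.eventually_nhds_iff_ball.1 <|
    ((continuousAt_const.dist hf).add continuousAt_const).eventually_lt hε (by simpa using hx)

theorem exists_pos_norm_smul_le {X Y : Type*} [SeminormedAddCommGroup X] [NormedSpace ℝ X]
    [SeminormedAddCommGroup Y] [NormedSpace ℝ Y] (T : X →L[ℝ] Y) {s : Set X}
    (hs : Bornology.IsBounded s) {τ : ℝ} (hτ : 0 < τ) :
    ∃ δ : ℝ, 0 < δ ∧ ∀ x ∈ s, ‖δ • T x‖ ≤ τ := by
  obtain ⟨C, hC, hbound⟩ := (T.lipschitz.isBounded_image hs).exists_pos_norm_le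
  refine ⟨τ / C, div_pos hτ hC, fun x hx => ?_⟩
  rw [norm_smul, Real.norm_of_nonneg (div_pos hτ hC).le]
  calc τ / C * ‖T x‖ ≤ τ / C * C := by gcongr; exact hbound _ (mem_image_of_mem T hx)
    _ = τ := div_mul_cancel₀ τ hC.ne'

end Cover

theorem exists_cover_affineBlend_bound {X Y : Type*} [NormedAddCommGroup X] [InnerProductSpace ℝ X]
    [TopologicalSpace.SeparableSpace X] [NormedAddCommGroup Y] [NormedSpace ℝ Y]
    {U : Set X} (hU : IsOpen U) (hne : U.Nonempty) {f : X → Y} (hf : ContinuousOn f U)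
    {ε : X → ℝ} (hε : ContinuousOn ε U) (hεpos : ∀ x ∈ U, 0 < ε x) :
    ∃ (c : ℕ → X) (r : ℕ → ℝ), U ⊆ ⋃ n, ball (c n) (r n) ∧
      ∀ T : X →L[ℝ] Y, ∃ δ : ℕ → ℝ, (∀ n, 0 < δ n) ∧
        ∀ x ∈ U, ‖affineBlend c r (f ∘ c) δ T x - f x‖ ≤ ε x := by
  have hosc : ∀ x ∈ U, ∃ ρ > 0, ∀ y ∈ ball x (2 * ρ), dist (f x) (f y) + ε x / 2 < ε y := by
    intro x hx
    obtain ⟨ρ, hρ, hball⟩ := exists_ball_dist_add_half_lt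
      (hf.continuousAt (hU.mem_nhds hx)) (hε.continuousAt (hU.mem_nhds hx)) (hεpos x hx)
    exact ⟨ρ / 2, half_pos hρ, by rwa [mul_div_cancel₀ ρ two_ne_zero]⟩
  choose! ρ hρ hball using hosc
  obtain ⟨c, hcU, hcov⟩ := exists_seq_subset_iUnion_ball hne hρ
  refine ⟨c, ρ ∘ c, hcov, fun T => ?_⟩
  choose δ hδ hδT using fun n => exists_pos_norm_smul_le T
    (isBounded_ball (x := c n) (r := 2 * ρ (c n))) (half_pos (hεpos _ (hcU n)))
  refine ⟨δ, hδ, fun x hx => ?_⟩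
  obtain ⟨N, hN⟩ := mem_iUnion.1 (hcov hx)
  refine norm_affineBlend_sub_le (fun n => hρ _ (hcU n)) hN fun n hn => ?_
  calc ‖f (c n) + δ n • T x - f x‖ = ‖(f (c n) - f x) + δ n • T x‖ := by rw [add_sub_right_comm]
    _ ≤ dist (f (c n)) (f x) + ε (c n) / 2 := by
      rw [dist_eq_norm]
      exact norm_add_le_of_le le_rfl (hδT n x hn)
    _ ≤ ε x := (hball _ (hcU n) x hn).le

theorem exists_clm_criticalSet_affineBlend_subset {X : Type*} [NormedAddCommGroup X]
    [InnerProductSpace ℝ X] (c : ℕ → X) (Y : Type*) [NormedAddCommGroup Y] [NormedSpace ℝ Y]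
    [FiniteDimensional ℝ Y] :
    ∃ T : X →L[ℝ] Y, ∀ N, ∃ W : Submodule ℝ X, FiniteDimensional ℝ W ∧
      ∀ r a δ, (∀ n, 0 < δ n) → criticalSet (affineBlend c r a δ T) (ball (c N) (r N)) ⊆ W := by
  obtain ⟨T, hT⟩ := exists_clm_surjOn_orthogonal (Y := Y) (countable_range c)
  refine ⟨T, fun N => ?_⟩
  obtain ⟨W, hW, hsurj⟩ := hT (Submodule.span ℝ (c '' Iic N))
    (Submodule.span_mono (image_subset_range c _))
    (FiniteDimensional.span_of_finite ℝ ((finite_Iic N).image c))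
  refine ⟨W, hW, fun r a δ hδ x hx => ?_⟩
  by_contra hxW
  exact hx.2 (surjective_fderiv_affineBlend hδ hx.1 (hsurj x hxW))

theorem exists_smooth_approximation_with_locally_compact_closed_critical_set_general
    {X Y : Type*} [NormedAddCommGroup X] [InnerProductSpace ℝ X]
    [TopologicalSpace.SeparableSpace X] [NormedAddCommGroup Y] [NormedSpace ℝ Y]
    [FiniteDimensional ℝ Y] {U : Set X} (hU : IsOpen U) {f : X → Y} (hf : ContinuousOn f U)
    {ε : X → ℝ} (hε : ContinuousOn ε U) (hεpos : ∀ x ∈ U, 0 < ε x) :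
    ∃ φ : X → Y, ContDiffOn ℝ (⊤ : ℕ∞) φ U ∧
      (∀ x ∈ criticalSet φ U, ∃ K, IsCompact K ∧ K ⊆ criticalSet φ U ∧ K ∈ 𝓝[criticalSet φ U] x) ∧
      (∃ F, IsClosed F ∧ criticalSet φ U = F ∩ U) ∧ ∀ x ∈ U, ‖φ x - f x‖ ≤ ε x := by
  rcases U.eq_empty_or_nonempty with rfl | hne
  · exact ⟨0, by simp, by simp [criticalSet], ⟨∅, isClosed_empty, by simp [criticalSet]⟩, by simp⟩
  obtain ⟨c, r, hcov, happrox⟩ := exists_cover_affineBlend_bound hU hne hf hε hεpos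
  obtain ⟨T, hT⟩ := exists_clm_criticalSet_affineBlend_subset c Y
  obtain ⟨δ, hδ, hbound⟩ := happrox T
  have hsmooth : ContDiffOn ℝ (⊤ : ℕ∞) (affineBlend c r (f ∘ c) δ T) U := fun x hx =>
    let ⟨_, hN⟩ := mem_iUnion.1 (hcov hx)
    (contDiffAt_affineBlend hN).contDiffWithinAt
  obtain ⟨F, hF, hCF⟩ := exists_isClosed_criticalSet_eq_inter hU (hsmooth.of_le (by simp))
  refine ⟨_, hsmooth, fun x hx => ?_, ⟨F, hF, hCF⟩, hbound⟩
  obtain ⟨N, hN⟩ := mem_iUnion.1 (hcov hx.1)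
  obtain ⟨W, _, hW⟩ := hT N
  refine exists_isCompact_subset_mem_nhdsWithin hF hU hCF hx (W := W) ?_
  filter_upwards [self_mem_nhdsWithin, mem_nhdsWithin_of_mem_nhds (isOpen_ball.mem_nhds hN)]
    with y hy hyN using hW r _ δ hδ ⟨hyN, hy.2⟩

/-- Every continuous map from an open subset `U` of a separable infinite-dimensional real
Hilbert space into `ℝ^m` can be `ε/2`-approximated by a `C^∞` map whose set of critical
points is locally compact and closed relative to `U`. -/
theorem exists_smooth_approximation_with_locally_compact_closed_critical_set
    {X : Type*} [NormedAddCommGroup X] [InnerProductSpace ℝ X] [CompleteSpace X]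
    [TopologicalSpace.SeparableSpace X] (hX : ¬ FiniteDimensional ℝ X)
    (m : ℕ) (U : Set X) (hU : IsOpen U)
    (f : X → EuclideanSpace ℝ (Fin m)) (hf : ContinuousOn f U)
    (ε : X → ℝ) (hε : ContinuousOn ε U) (hεpos : ∀ x ∈ U, 0 < ε x) :
    ∃ φ : X → EuclideanSpace ℝ (Fin m),
      ContDiffOn ℝ (⊤ : ℕ∞) φ U ∧
      -- the critical set `C_φ = {x ∈ U | dφ(x) is not surjective}` is locally compact:
      (∀ x ∈ {x ∈ U | ¬ Function.Surjective (fderiv ℝ φ x)},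
        ∃ K : Set X, IsCompact K ∧ K ⊆ {x ∈ U | ¬ Function.Surjective (fderiv ℝ φ x)} ∧
          K ∈ nhdsWithin x {x ∈ U | ¬ Function.Surjective (fderiv ℝ φ x)}) ∧
      -- and closed relative to `U`:
      (∃ F : Set X, IsClosed F ∧
        {x ∈ U | ¬ Function.Surjective (fderiv ℝ φ x)} = F ∩ U) ∧
      (∀ x ∈ U, ‖φ x - f x‖ ≤ ε x / 2) :=
  exists_smooth_approximation_with_locally_compact_closed_critical_set_general hU hf
    (hε.div_const 2) fun x hx => half_pos (hεpos x hx)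
end

section
/- Let X be a separable infinite-dimensional real Hilbert space, let (y_n) be a sequence of linearly independent vectors in X, and let (s_n) be a sequence of positive real numbers. Then there exists a sequence of positive numbers (r_n) with s_n ≤ r_n ≤ (3/2)·s_n such that, denoting by S_n the sphere of center y_n and radius r_n: (i) for each finite strictly increasing sequence of positive integers k₁ < k₂ < … < k_m, the affine span of {y_{k₁}, …, y_{k_m}} has empty intersection with S_{k₁} ∩ … ∩ S_{k_m}; and (ii) y_n ∉ S_k for all n, k. -/
open Metric Set

/-!
The radii are chosen one after another. If a set lies in a sphere around each point of `C`, then its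
direction is orthogonal to that of `C`. Inside the affine span of `C` and one more point, where the
span of `C` has codimension at most one, such a set is therefore contained in a line, and a line
meets a sphere in at most two points. Consequently, once the spheres around finitely many centers
are fixed, the next sphere misses their intersection within the affine span of all these centers
as soon as its radius avoids at most two values. There are countably many families of earlier
centers and countably many distances between centers, so only countably many radii are forbidden.
-/

lemma exists_forall_of_forall_exists_Iio {ι : Type*} [Preorder ι] [WellFoundedLT ι] {α : ι → Type*}
    {p : ∀ i, (∀ j : Iio i, α j) → α i → Prop} (h : ∀ i f, ∃ a, p i f a) :
    ∃ r : ∀ i, α i, ∀ i, p i (fun j => r j) (r i) := by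
  choose F hF using h
  let r : ∀ i, α i := wellFounded_lt.fix fun i f => F i fun j => f j j.2
  have r_eq (i : ι) : r i = F i fun j => r j := WellFounded.fix_eq _ _ i
  exact ⟨r, fun i => (r_eq i).symm ▸ hF i fun j => r j⟩

lemma rank_le_rank_of_disjoint_of_le_sup {R M : Type*} [Ring R] [AddCommGroup M] [Module R M]
    {U V W : Submodule R M} (hdisj : Disjoint V W) (hle : W ≤ V ⊔ U) :
    Module.rank R W ≤ Module.rank R U := by
  have mkQ_injective : Function.Injective (V.mkQ.domRestrict W) := by
    rw [← LinearMap.ker_eq_bot, LinearMap.ker_domRestrict, Submodule.ker_mkQ,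
      ← Submodule.disjoint_iff_comap_eq_bot]
    exact hdisj.symm
  have map_le : W.map V.mkQ ≤ U.map V.mkQ := by
    simpa [Submodule.map_sup] using Submodule.map_mono (f := V.mkQ) hle
  calc
    Module.rank R W = Module.rank R (W.map V.mkQ) := by
      rw [← rank_range_of_injective _ mkQ_injective, LinearMap.range_domRestrict]
    _ ≤ Module.rank R (U.map V.mkQ) := Submodule.rank_mono map_le
    _ ≤ Module.rank R U := rank_map_le _ _

lemma vectorSpan_insert_eq_sup_span_singleton {k V P : Type*} [Ring k] [AddCommGroup V]
    [Module k V] [AddTorsor V P] {C : Set P} {c : P} (hc : c ∈ C) (z : P) :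
    vectorSpan k (insert z C) = vectorSpan k C ⊔ Submodule.span k {z -ᵥ c} := by
  rw [← direction_affineSpan, ← affineSpan_insert_affineSpan,
    AffineSubspace.direction_affineSpan_insert (mem_affineSpan k hc), direction_affineSpan,
    sup_comm]

section Spheres

open EuclideanGeometry

variable {V P : Type*} [NormedAddCommGroup V] [InnerProductSpace ℝ V] [MetricSpace P]
  [NormedAddTorsor V P] {C s : Set P} {z : P}

lemma encard_le_two_of_cospherical_of_collinear (hs : Cospherical s) (hline : Collinear ℝ s) :
    s.encard ≤ 2 := by
  by_contra! hcard
  obtain ⟨t, hts, ht⟩ := exists_subset_encard_eq (Order.add_one_le_of_lt hcard)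
  obtain ⟨a, b, c, hab, hac, hbc, rfl⟩ := encard_eq_three.1 ht
  exact affineIndependent_iff_not_collinear_set.1
    ((hs.subset hts).affineIndependent_of_ne hab hac hbc) (hline.subset hts)

lemma isOrtho_vectorSpan_of_forall_subset_sphere (h : ∀ c ∈ C, ∃ ρ, s ⊆ sphere c ρ) :
    vectorSpan ℝ C ⟂ vectorSpan ℝ s := by
  refine Submodule.isOrtho_span.2 ?_
  rintro _ ⟨c, hc, c', hc', rfl⟩ _ ⟨x, hx, x', hx', rfl⟩
  obtain ⟨ρ, hρ⟩ := h c hc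
  obtain ⟨ρ', hρ'⟩ := h c' hc'
  exact inner_vsub_vsub_of_dist_eq_of_dist_eq ((hρ' hx').trans (hρ' hx).symm)
    ((hρ hx').trans (hρ hx).symm)

lemma collinear_of_subset_affineSpan_insert (hC : C.Nonempty) (hs : s ⊆ affineSpan ℝ (insert z C))
    (h : ∀ c ∈ C, ∃ ρ, s ⊆ sphere c ρ) : Collinear ℝ s := by
  obtain ⟨c, hc⟩ := hC
  have hdir : vectorSpan ℝ s ≤ vectorSpan ℝ C ⊔ Submodule.span ℝ {z -ᵥ c} := by
    rw [← vectorSpan_insert_eq_sup_span_singleton hc, ← direction_affineSpan ℝ (insert z C)]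
    exact vectorSpan_mono ℝ hs
  calc
    Module.rank ℝ (vectorSpan ℝ s) ≤ Module.rank ℝ (Submodule.span ℝ {z -ᵥ c}) :=
      rank_le_rank_of_disjoint_of_le_sup
        (isOrtho_vectorSpan_of_forall_subset_sphere h).disjoint hdir
    _ ≤ 1 := by simpa using rank_span_le (R := ℝ) {z -ᵥ c}

lemma finite_of_subset_affineSpan_insert (hs : s ⊆ affineSpan ℝ (insert z C))
    (h : ∀ c ∈ C, ∃ ρ, s ⊆ sphere c ρ) : s.Finite := by
  obtain rfl | ⟨c, hc⟩ := C.eq_empty_or_nonempty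
  · exact (finite_singleton z).subset (by simpa using hs)
  · obtain ⟨ρ, hρ⟩ := h c hc
    exact finite_of_encard_le_coe <| encard_le_two_of_cospherical_of_collinear ⟨c, ρ, hρ⟩
      (collinear_of_subset_affineSpan_insert ⟨c, hc⟩ hs h)

end Spheres

section Radii

variable {V P ι : Type*} [NormedAddCommGroup V] [InnerProductSpace ℝ V] [MetricSpace P]
  [NormedAddTorsor V P]

/-- The radii that the sphere with center `y i` must avoid, given the radii `f` of the spheres with
earlier centers: the distances from `y i` to all the centers, and to the common points of finitely
many earlier spheres in the affine span of their centers and `y i`. -/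
def forbiddenRadii [Preorder ι] (y : ι → P) (i : ι) (f : Iio i → ℝ) : Set ℝ :=
  range (fun j => dist (y j) (y i)) ∪
    ⋃ t : Finset (Iio i), (fun x => dist x (y i)) ''
      ((affineSpan ℝ (insert (y i) ((fun j : Iio i => y j) '' t)) : Set P) ∩
        ⋂ j ∈ t, sphere (y j) (f j))

lemma countable_forbiddenRadii [Preorder ι] [Countable ι] (y : ι → P) (i : ι) (f : Iio i → ℝ) :
    (forbiddenRadii y i f).Countable := by
  refine (countable_range _).union (countable_iUnion fun t => (Finite.image _ ?_).countable)
  refine finite_of_subset_affineSpan_insert inter_subset_left ?_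
  rintro _ ⟨j, hj, rfl⟩
  exact ⟨f j, inter_subset_right.trans (biInter_subset_of_mem hj)⟩

lemma affineSpan_inter_iInter_sphere_eq_empty [LinearOrder ι] {y : ι → P} {r : ι → ℝ}
    (hr : ∀ i, r i ∉ forbiddenRadii y i fun j => r j) {t : Finset ι} (ht : t.Nonempty) :
    (affineSpan ℝ (y '' t) : Set P) ∩ (⋂ k ∈ t, sphere (y k) (r k)) = ∅ := by
  rw [eq_empty_iff_forall_notMem]
  rintro x ⟨hspan, hx⟩
  have mem_sphere_of_mem : ∀ k ∈ t, x ∈ sphere (y k) (r k) := mem_iInter₂.1 hx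
  set i := t.max' ht
  have hi : i ∈ t := t.max'_mem ht
  have centers_eq : y '' t = insert (y i) ((fun j : Iio i => y j) '' t.subtype (· ∈ Iio i)) := by
    ext p
    constructor
    · rintro ⟨k, hk, rfl⟩
      obtain hki | hki := (t.le_max' k hk).eq_or_lt
      · exact Or.inl (congrArg y hki)
      · exact Or.inr ⟨⟨k, hki⟩, Finset.mem_subtype.2 hk, rfl⟩
    · rintro (rfl | ⟨j, hj, rfl⟩)
      · exact mem_image_of_mem y hi
      · exact mem_image_of_mem y (Finset.mem_subtype.1 hj)
  refine hr i (Or.inr (mem_iUnion.2 ⟨t.subtype (· ∈ Iio i), x, ⟨centers_eq ▸ hspan, ?_⟩,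
    mem_sphere_of_mem i hi⟩))
  exact mem_iInter₂.2 fun j hj => mem_sphere_of_mem j (Finset.mem_subtype.1 hj)

theorem controlled_intersection_of_spheres_general [Countable ι] (y : ι → P) (A : ι → Set ℝ)
    (hA : ∀ i, ¬ (A i).Countable) :
    ∃ r : ι → ℝ, (∀ i, r i ∈ A i) ∧
      (∀ t : Finset ι, t.Nonempty →
        (affineSpan ℝ (y '' t) : Set P) ∩ (⋂ k ∈ t, sphere (y k) (r k)) = ∅) ∧
      (∀ i k, y i ∉ sphere (y k) (r k)) := by
  obtain ⟨_, _⟩ := exists_wellFoundedLT ι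
  have exists_allowed (i : ι) (f : Iio i → ℝ) : ∃ ρ, ρ ∈ A i ∧ ρ ∉ forbiddenRadii y i f :=
    not_subset.1 fun hsub => hA i ((countable_forbiddenRadii y i f).mono hsub)
  obtain ⟨r, hr⟩ := exists_forall_of_forall_exists_Iio
    (p := fun i f ρ => ρ ∈ A i ∧ ρ ∉ forbiddenRadii y i f) exists_allowed
  exact ⟨r, fun i => (hr i).1,
    fun t ht => affineSpan_inter_iInter_sphere_eq_empty (fun i => (hr i).2) ht,
    fun i k hik => (hr k).2 (Or.inl ⟨i, hik⟩)⟩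

end Radii

/-- Given a linearly independent sequence `(yₙ)` in a separable infinite-dimensional real
Hilbert space and positive numbers `(sₙ)`, one can choose radii `rₙ ∈ [sₙ, (3/2)sₙ]` so
that any finite intersection of the spheres `Sₙ = S(yₙ, rₙ)` misses the affine span of the
corresponding centers, and no center lies on any of the spheres. -/
theorem controlled_intersection_of_spheres
    {X : Type*} [NormedAddCommGroup X] [InnerProductSpace ℝ X] [CompleteSpace X]
    [TopologicalSpace.SeparableSpace X] (hX : ¬ FiniteDimensional ℝ X)
    (y : ℕ → X) (hy : LinearIndependent ℝ y)
    (s : ℕ → ℝ) (hs : ∀ n, 0 < s n) :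
    ∃ r : ℕ → ℝ,
      (∀ n, s n ≤ r n ∧ r n ≤ (3 / 2) * s n) ∧
      -- (i) for every finite nonempty set of indices, the affine span of the corresponding
      -- centers does not meet the intersection of the corresponding spheres:
      (∀ t : Finset ℕ, t.Nonempty →
        (affineSpan ℝ (y '' ↑t) : Set X) ∩ (⋂ k ∈ t, sphere (y k) (r k)) = ∅) ∧
      -- (ii) no center lies on any sphere:
      (∀ n k, y n ∉ sphere (y k) (r k)) :=
  controlled_intersection_of_spheres_general y (fun n => Icc (s n) ((3 / 2) * s n)) fun n =>
    Cardinal.Real.Icc_countable_iff.not.2 (by linarith [hs n])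
end

section
/- Let X be a separable infinite-dimensional real Hilbert space, let (x_n) be a sequence of points in X and (r_n) a sequence of positive numbers such that X = ⋃_{n=1}^∞ B(x_n, r_n/2). Then there exists a sequence (y_n) of linearly independent vectors in X with y_n ∈ B(x_n, r_n/2) for every n, such that X = ⋃_{n=1}^∞ B(y_n, r_n). -/
open Metric Set

/-!
A ball `B(xₙ, rₙ/2)` is contained in `B(yₙ, rₙ)` for every `yₙ ∈ B(xₙ, rₙ/2)`, so only linear
independence constrains the choice of `yₙ`. Choosing `yₙ` recursively outside the span of the
earlier vectors achieves it: that span is a finite-dimensional, hence proper, subspace, and a proper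
subspace has empty interior, so it cannot contain `B(xₙ, rₙ/2)`.
-/

section LinearAlgebra

variable {K V ι : Type*} [DivisionRing K] [AddCommGroup V] [Module K V] [LinearOrder ι]

lemma linearIndependent_of_forall_notMem_span_image_Iio {v : ι → V}
    (hv : ∀ i, v i ∉ Submodule.span K (v '' Iio i)) : LinearIndependent K v := by
  refine linearIndepOn_univ_iff.1 (linearIndepOn_of_finite univ fun t _ ht => ?_)
  lift t to Finset ι using ht
  induction t using Finset.induction_on_max with
  | empty => simp
  | insert i t hlt ih =>
    rw [Finset.coe_insert]
    exact (ih (subset_univ _)).insert fun hi =>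
      hv i (Submodule.span_mono (image_mono fun j hj => hlt j hj) hi)

lemma exists_linearIndependent_forall_mem_of_wellFoundedLT [WellFoundedLT ι] {s : ι → Set V}
    (hs : ∀ i (f : Iio i → V), ¬ s i ⊆ Submodule.span K (range f)) :
    ∃ v : ι → V, LinearIndependent K v ∧ ∀ i, v i ∈ s i := by
  choose next hmem hspan using fun i f => not_subset.1 (hs i f)
  let v : ι → V := WellFoundedLT.fix fun i f => next i fun j => f j j.2
  have hv (i : ι) : v i = next i fun j => v j := WellFoundedLT.fix_eq _ i
  refine ⟨v, linearIndependent_of_forall_notMem_span_image_Iio fun i => ?_, fun i => ?_⟩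
  · rw [image_eq_range, hv]
    exact hspan i _
  · rw [hv]
    exact hmem i _

end LinearAlgebra

lemma exists_linearIndependent_forall_mem_of_countable {K V ι : Type*} [DivisionRing K]
    [AddCommGroup V] [Module K V] [Countable ι] {s : ι → Set V}
    (hs : ∀ i (t : Set V), t.Finite → ¬ s i ⊆ Submodule.span K t) :
    ∃ v : ι → V, LinearIndependent K v ∧ ∀ i, v i ∈ s i := by
  obtain ⟨e, he⟩ := exists_injective_nat ι
  let : LinearOrder ι := LinearOrder.lift' e he
  have : WellFoundedLT ι := ⟨InvImage.wf e wellFounded_lt⟩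
  have hfin (i : ι) : (Iio i).Finite := (finite_Iio (e i)).preimage he.injOn
  refine exists_linearIndependent_forall_mem_of_wellFoundedLT fun i f => hs i _ ?_
  have := (hfin i).to_subtype
  exact finite_range f

section TopologicalModule

open Topology

lemma interior_span_eq_empty_of_finite {R M : Type*} [Ring R] [TopologicalSpace R]
    [(𝓝[{a : R | IsUnit a}] 0).NeBot] [AddCommGroup M] [TopologicalSpace M] [ContinuousAdd M]
    [Module R M] [ContinuousSMul R M] (hM : ¬ Module.Finite R M) {t : Set M} (ht : t.Finite) :
    interior (Submodule.span R t : Set M) = ∅ := by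
  by_contra hne
  have htop : Submodule.span R t = ⊤ :=
    Submodule.eq_top_of_nonempty_interior' _ (nonempty_iff_ne_empty.2 hne)
  exact hM (Module.finite_def.2 (htop ▸ Submodule.fg_span ht))

lemma exists_linearIndependent_forall_mem_of_isOpen {K V ι : Type*} [DivisionRing K]
    [TopologicalSpace K] [(𝓝[{a : K | IsUnit a}] 0).NeBot] [AddCommGroup V] [TopologicalSpace V]
    [ContinuousAdd V] [Module K V] [ContinuousSMul K V] [Countable ι]
    (hV : ¬ FiniteDimensional K V) {U : ι → Set V} (hU : ∀ i, IsOpen (U i))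
    (hne : ∀ i, (U i).Nonempty) :
    ∃ v : ι → V, LinearIndependent K v ∧ ∀ i, v i ∈ U i :=
  exists_linearIndependent_forall_mem_of_countable fun i _ ht hsub =>
    ((hne i).mono (interior_maximal hsub (hU i))).ne_empty (interior_span_eq_empty_of_finite hV ht)

end TopologicalModule

theorem perturbed_centers_linearly_independent_cover_general
    {𝕜 X ι : Type*} [NontriviallyNormedField 𝕜] [SeminormedAddCommGroup X] [NormedSpace 𝕜 X]
    [Countable ι] (hX : ¬ FiniteDimensional 𝕜 X) (x : ι → X) (r : ι → ℝ) (hr : ∀ i, 0 < r i)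
    (hcov : ⋃ i, ball (x i) (r i / 2) = univ) :
    ∃ y : ι → X,
      LinearIndependent 𝕜 y ∧
      (∀ i, y i ∈ ball (x i) (r i / 2)) ∧
      ⋃ i, ball (y i) (r i) = univ := by
  obtain ⟨y, hy, hmem⟩ := exists_linearIndependent_forall_mem_of_isOpen hX
    (fun _ => isOpen_ball) fun i => nonempty_ball (x := x i) |>.2 (half_pos (hr i))
  have hsub (i : ι) : ball (x i) (r i / 2) ⊆ ball (y i) (r i) :=
    ball_half_subset (x i) (mem_ball_comm.1 (hmem i))
  exact ⟨y, hy, hmem, eq_univ_of_univ_subset (hcov ▸ iUnion_mono hsub)⟩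

/-- If balls `B(xₙ, rₙ/2)` cover a separable infinite-dimensional real Hilbert space, one
can perturb the centers inside those balls so that they become linearly independent while
the balls `B(yₙ, rₙ)` still cover the space. -/
theorem perturbed_centers_linearly_independent_cover
    {X : Type*} [NormedAddCommGroup X] [InnerProductSpace ℝ X] [CompleteSpace X]
    [TopologicalSpace.SeparableSpace X] (hX : ¬ FiniteDimensional ℝ X)
    (x : ℕ → X) (r : ℕ → ℝ) (hr : ∀ n, 0 < r n)
    (hcov : ⋃ n, ball (x n) (r n / 2) = univ) :
    ∃ y : ℕ → X,
      LinearIndependent ℝ y ∧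
      (∀ n, y n ∈ ball (x n) (r n / 2)) ∧
      ⋃ n, ball (y n) (r n) = univ :=
  perturbed_centers_linearly_independent_cover_general hX x r hr hcov
end

section
/- Let X be a separable infinite-dimensional real Hilbert space, let m ≥ 1, and for each j = 1, …, m let (x^j_n)_{n∈ℕ} be points of X and (r^j_n)_{n∈ℕ} positive numbers such that X = ⋃_{n=1}^∞ B(x^j_n, r^j_n/2). Then one can choose points y^j_n ∈ B(x^j_n, r^j_n/2) for all j = 1, …, m and n ∈ ℕ such that the whole family {y^j_n : n ∈ ℕ, j = 1, …, m} is a set of linearly independent vectors and X = ⋃_{n=1}^∞ B(y^j_n, r^j_n) for every j = 1, …, m. -/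
/-!
The ball `B(x, r/2)` lies in `B(y, r)` for every `y ∈ B(x, r/2)`, so any choice of new centers
still covers the space and only linear independence is at stake. Well-order the balls so that each
has fewer predecessors than the dimension of the space, and choose the centers by transfinite
recursion: those already chosen span a proper subspace, and since a set with nonempty interior
spans the whole space, the current ball contains a point outside that subspace.
-/

open Metric Set

open Submodule
open scoped Cardinal

universe u v w

theorem exists_forall_domRestrict_Iio {ι α : Type*} [Preorder ι] [WellFoundedLT ι]
    {P : (i : ι) → (Iio i → α) → α → Prop} (h : ∀ i f, ∃ a, P i f a) :
    ∃ y : ι → α, ∀ i, P i ((Iio i).domRestrict y) (y i) := by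
  choose next hnext using h
  let y : ι → α := WellFoundedLT.fix fun i earlier => next i fun j => earlier j j.2
  have hy : ∀ i, y i = next i ((Iio i).domRestrict y) := fun i => WellFoundedLT.fix_eq _ i
  exact ⟨y, fun i => hy i ▸ hnext i _⟩

section DivisionRing

variable {K : Type*} {V : Type u} [DivisionRing K] [AddCommGroup V] [Module K V]

theorem linearIndependent_of_notMem_span_image_Iio {ι : Type*} [LinearOrder ι] {y : ι → V}
    (hy : ∀ i, y i ∉ span K (y '' Iio i)) : LinearIndependent K y := by
  refine linearIndependent_iff_finset_linearIndependent.2 fun s => ?_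
  change LinearIndepOn K y s
  induction s using Finset.induction_on_max with
  | empty => simp
  | insert a s hs ih =>
    rw [Finset.coe_insert]
    exact ih.insert fun ha => hy a (span_mono (image_mono hs) ha)

theorem exists_mem_notMem_span_of_mk_lt_rank {U s : Set V} (hU : span K U = ⊤)
    (hs : #s < Module.rank K V) : ∃ a ∈ U, a ∉ span K s := by
  by_contra! hUs
  have htop : span K s = ⊤ := top_le_iff.1 (hU ▸ span_le.2 hUs)
  have hrank : Module.rank K V ≤ #s := by
    rw [← rank_top, ← htop]
    exact rank_span_le s
  exact hrank.not_gt hs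

theorem exists_linearIndependent_mem_of_span_eq_top {ι : Type v} {U : ι → Set V}
    (hcard : Cardinal.lift.{u} #ι ≤ Cardinal.lift.{v} (Module.rank K V))
    (hU : ∀ i, span K (U i) = ⊤) :
    ∃ y : ι → V, (∀ i, y i ∈ U i) ∧ LinearIndependent K y := by
  obtain ⟨_, _, hord⟩ := Cardinal.exists_ord_eq_type_lt ι
  have hrange : ∀ i (f : Iio i → V), #(range f) < Module.rank K V := fun i f =>
    Cardinal.lift_lt.1 <| calc
      Cardinal.lift.{v} #(range f) ≤ Cardinal.lift.{u} #(Iio i) := Cardinal.mk_range_le_lift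
      _ < Cardinal.lift.{u} #ι := Cardinal.lift_lt.2 (Cardinal.mk_Iio_lt i hord)
      _ ≤ Cardinal.lift.{v} (Module.rank K V) := hcard
  obtain ⟨y, hy⟩ := exists_forall_domRestrict_Iio fun i f =>
    exists_mem_notMem_span_of_mk_lt_rank (hU i) (hrange i f)
  simp only [range_domRestrict] at hy
  exact ⟨y, fun i => (hy i).1, linearIndependent_of_notMem_span_image_Iio fun i => (hy i).2⟩

theorem lift_mk_le_lift_rank_of_not_finite {ι : Type v} [Countable ι]
    (hV : ¬ Module.Finite K V) :
    Cardinal.lift.{u} #ι ≤ Cardinal.lift.{v} (Module.rank K V) := by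
  have hrank : ℵ₀ ≤ Module.rank K V := not_lt.1 (Module.rank_lt_aleph0_iff.not.2 hV)
  exact (Cardinal.lift_le_aleph0.2 Cardinal.mk_le_aleph0).trans (Cardinal.aleph0_le_lift.2 hrank)

end DivisionRing

theorem span_eq_top_of_nonempty_interior {R M : Type*} [Ring R] [TopologicalSpace R]
    [(nhdsWithin (0 : R) {a | IsUnit a}).NeBot] [AddCommGroup M] [TopologicalSpace M]
    [ContinuousAdd M] [Module R M] [ContinuousSMul R M] {s : Set M} (hs : (interior s).Nonempty) :
    span R s = ⊤ :=
  eq_top_of_nonempty_interior' _ (hs.mono (interior_mono subset_span))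

theorem iUnion_ball_eq_univ_of_mem_ball_half {α ι : Type*} [PseudoMetricSpace α] {x y : ι → α}
    {r : ι → ℝ} (hy : ∀ i, y i ∈ ball (x i) (r i / 2)) (hcov : ⋃ i, ball (x i) (r i / 2) = univ) :
    ⋃ i, ball (y i) (r i) = univ :=
  eq_univ_of_subset (iUnion_mono fun i => ball_half_subset (x i) (mem_ball_comm.1 (hy i))) hcov

theorem perturbed_centers_of_several_families_linearly_independent_cover_general
    {𝕜 : Type*} {X : Type u} {ι : Type v} {κ : Type w} [NontriviallyNormedField 𝕜]
    [SeminormedAddCommGroup X] [NormedSpace 𝕜 X]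
    (hcard : Cardinal.lift.{u} #(ι × κ) ≤ Cardinal.lift.{max v w} (Module.rank 𝕜 X))
    (x : ι → κ → X) (r : ι → κ → ℝ) (hr : ∀ j n, 0 < r j n)
    (hcov : ∀ j, ⋃ n, ball (x j n) (r j n / 2) = univ) :
    ∃ y : ι → κ → X,
      (∀ j n, y j n ∈ ball (x j n) (r j n / 2)) ∧
      LinearIndependent 𝕜 (fun p : ι × κ => y p.1 p.2) ∧
      (∀ j, ⋃ n, ball (y j n) (r j n) = univ) := by
  have hspan : ∀ p : ι × κ, span 𝕜 (ball (x p.1 p.2) (r p.1 p.2 / 2)) = ⊤ := fun p =>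
    span_eq_top_of_nonempty_interior <| by
      simpa only [isOpen_ball.interior_eq, nonempty_ball] using half_pos (hr p.1 p.2)
  obtain ⟨y, hy, hlin⟩ := exists_linearIndependent_mem_of_span_eq_top hcard hspan
  exact ⟨fun j n => y (j, n), fun j n => hy (j, n), hlin,
    fun j => iUnion_ball_eq_univ_of_mem_ball_half (fun n => hy (j, n)) (hcov j)⟩

/-- Given `m ≥ 1` families of balls `B(xʲₙ, rʲₙ/2)` each covering a separable
infinite-dimensional real Hilbert space, one can perturb all the centers inside those
balls so that the whole family of new centers is linearly independent while, for each
`j`, the balls `B(yʲₙ, rʲₙ)` still cover the space. -/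
theorem perturbed_centers_of_several_families_linearly_independent_cover
    {X : Type*} [NormedAddCommGroup X] [InnerProductSpace ℝ X] [CompleteSpace X]
    [TopologicalSpace.SeparableSpace X] (hX : ¬ FiniteDimensional ℝ X)
    (m : ℕ) (hm : 1 ≤ m)
    (x : Fin m → ℕ → X) (r : Fin m → ℕ → ℝ) (hr : ∀ j n, 0 < r j n)
    (hcov : ∀ j, ⋃ n, ball (x j n) (r j n / 2) = univ) :
    ∃ y : Fin m → ℕ → X,
      (∀ j n, y j n ∈ ball (x j n) (r j n / 2)) ∧
      LinearIndependent ℝ (fun p : Fin m × ℕ => y p.1 p.2) ∧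
      (∀ j, ⋃ n, ball (y j n) (r j n) = univ) := by
  exact perturbed_centers_of_several_families_linearly_independent_cover_general
    (lift_mk_le_lift_rank_of_not_finite hX) x r hr hcov
end

section
/- Let X be a real Hilbert space, let y₁, …, y_n ∈ X be linearly independent, let g : ℝⁿ → ℝ be a differentiable function, and define F : X → ℝ by F(x) = g(‖x − y₁‖², …, ‖x − y_n‖²). If x ∈ X is such that the Fréchet derivative F'(x) = 0 but the gradient of g at the point (‖x − y₁‖², …, ‖x − y_n‖²) is nonzero, then x belongs to the affine span of {y₁, …, y_n}. -/
open Metric Set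

/-!
Let `cᵢ` be the `i`-th partial derivative of `g`. By the chain rule `F'(x)` is the inner product
with `2 ∑ cᵢ (x - yᵢ)`, so at a critical point `∑ cᵢ (x - yᵢ) = 0`. Were `∑ cᵢ = 0`, this would be
an affine dependence between the `yᵢ`, so every `cᵢ` would vanish. Hence `∑ cᵢ ≠ 0`, and dividing
by it writes `x` as an affine combination of the `yᵢ`.
-/

section AffineCombination

variable {ι k V P : Type*} [AddCommGroup V] [AddTorsor V P] {s : Finset ι} {w : ι → k}
  {p : ι → P} {x : P}

theorem mem_affineSpan_of_weightedVSubOfPoint_eq_zero [DivisionRing k] [Module k V]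
    (hsum : ∑ i ∈ s, w i ≠ 0) (hx : s.weightedVSubOfPoint p x w = 0) :
    x ∈ affineSpan k (range p) := by
  set c := ∑ i ∈ s, w i
  have hone : ∑ i ∈ s, (c⁻¹ • w) i = 1 := by
    simp only [Pi.smul_apply, smul_eq_mul, ← Finset.mul_sum]
    exact inv_mul_cancel₀ hsum
  have hcomb : s.affineCombination k p (c⁻¹ • w) = x := by
    have hzero : s.weightedVSubOfPoint p x (c⁻¹ • w) = 0 := by
      simp only [Finset.weightedVSubOfPoint_apply] at hx ⊢
      simp only [Pi.smul_apply, smul_assoc, ← Finset.smul_sum, hx, smul_zero]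
    rw [s.affineCombination_eq_weightedVSubOfPoint_vadd_of_sum_eq_one _ p hone x, hzero,
      zero_vadd]
  exact hcomb ▸ affineCombination_mem_affineSpan hone p

theorem sum_ne_zero_of_weightedVSubOfPoint_eq_zero [Ring k] [Module k V]
    (hp : AffineIndependent k p) (hw : ∃ i ∈ s, w i ≠ 0)
    (hx : s.weightedVSubOfPoint p x w = 0) : ∑ i ∈ s, w i ≠ 0 := by
  obtain ⟨i, hi, hwi⟩ := hw
  intro hsum
  rw [← s.weightedVSub_eq_weightedVSubOfPoint_of_sum_eq_zero w p hsum x] at hx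
  exact hwi (hp s w hsum hx i hi)

end AffineCombination

section RadialCombination

variable {ι X : Type*} [NormedAddCommGroup X] [InnerProductSpace ℝ X]
  {y : ι → X} {x : X} {g : (ι → ℝ) → ℝ} {g' : (ι → ℝ) →L[ℝ] ℝ}

theorem hasFDerivAt_comp_norm_sub_sq [Fintype ι] [DecidableEq ι]
    (hg : HasFDerivAt g g' (fun i => ‖x - y i‖ ^ 2)) :
    HasFDerivAt (fun z => g (fun i => ‖z - y i‖ ^ 2))
      (innerSL ℝ ((2 : ℝ) • ∑ i, g' (Pi.single i 1) • (x - y i))) x := by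
  have hsq : HasFDerivAt (fun z i => ‖z - y i‖ ^ 2)
      (ContinuousLinearMap.pi fun i => 2 • innerSL ℝ (x - y i)) x :=
    hasFDerivAt_pi.2 fun i => by simpa using ((hasFDerivAt_id x).sub_const (y i)).norm_sq
  refine (hg.comp x hsq).congr_fderiv (ContinuousLinearMap.ext fun v => ?_)
  calc g' (fun i => (2 • innerSL ℝ (x - y i)) v)
      = ∑ i, (2 * inner ℝ (x - y i) v) * g' (Pi.single i 1) := by
        rw [pi_eq_sum_univ' (fun i => (2 • innerSL ℝ (x - y i)) v)]
        simp only [map_sum, map_smul, smul_apply, innerSL_apply_apply, nsmul_eq_mul,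
          Nat.cast_ofNat, smul_eq_mul]
    _ = innerSL ℝ ((2 : ℝ) • ∑ i, g' (Pi.single i 1) • (x - y i)) v := by
        simp only [innerSL_apply_apply, real_inner_smul_left, sum_inner, Finset.mul_sum]
        exact Finset.sum_congr rfl fun i _ => by ring

theorem weightedVSubOfPoint_eq_zero_of_fderiv_eq_zero [Fintype ι] [DecidableEq ι]
    (hg : HasFDerivAt g g' (fun i => ‖x - y i‖ ^ 2))
    (hcrit : fderiv ℝ (fun z => g (fun i => ‖z - y i‖ ^ 2)) x = 0) :
    Finset.univ.weightedVSubOfPoint y x (fun i => g' (Pi.single i 1)) = 0 := by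
  rw [(hasFDerivAt_comp_norm_sub_sq hg).fderiv, ← map_zero (innerSL ℝ), innerSL_inj] at hcrit
  have hsum : ∑ i, g' (Pi.single i 1) • (x - y i) = 0 :=
    (smul_eq_zero.1 hcrit).resolve_left two_ne_zero
  rw [Finset.weightedVSubOfPoint_apply, ← neg_eq_zero, ← hsum, ← Finset.sum_neg_distrib]
  simp only [vsub_eq_sub, ← smul_neg, neg_sub]

theorem critical_points_of_radial_combination_lie_in_affine_span_general [Finite ι]
    (hy : AffineIndependent ℝ y) (hg : HasFDerivAt g g' (fun i => ‖x - y i‖ ^ 2))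
    (hcrit : fderiv ℝ (fun z => g (fun i => ‖z - y i‖ ^ 2)) x = 0) (hg' : g' ≠ 0) :
    x ∈ affineSpan ℝ (range y) := by
  classical
  cases nonempty_fintype ι
  have hpartial : ∃ i ∈ Finset.univ, g' (Pi.single i 1) ≠ 0 := by
    by_contra! h
    exact hg' <| ContinuousLinearMap.coe_injective <| LinearMap.pi_ext' fun i =>
      LinearMap.ext_ring (h i (Finset.mem_univ i))
  have hx := weightedVSubOfPoint_eq_zero_of_fderiv_eq_zero hg hcrit
  exact mem_affineSpan_of_weightedVSubOfPoint_eq_zero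
    (sum_ne_zero_of_weightedVSubOfPoint_eq_zero hy hpartial hx) hx

end RadialCombination

/-- If `F(x) = g(‖x − y₁‖², …, ‖x − yₙ‖²)` with `y₁, …, yₙ` linearly independent in a real
Hilbert space and `g` differentiable, then any critical point of `F` at which the gradient
of `g` does not vanish lies in the affine span of `y₁, …, yₙ`. -/
theorem critical_points_of_radial_combination_lie_in_affine_span
    {X : Type*} [NormedAddCommGroup X] [InnerProductSpace ℝ X] [CompleteSpace X]
    (n : ℕ) (y : Fin n → X) (hy : LinearIndependent ℝ y)
    (g : (Fin n → ℝ) → ℝ) (hg : Differentiable ℝ g)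
    (F : X → ℝ) (hF : F = fun x => g (fun i => ‖x - y i‖ ^ 2))
    (x : X)
    (hcrit : fderiv ℝ F x = 0)
    (hgrad : fderiv ℝ g (fun i => ‖x - y i‖ ^ 2) ≠ 0) :
    x ∈ affineSpan ℝ (Set.range y) := by
  subst hF
  exact critical_points_of_radial_combination_lie_in_affine_span_general
    (hy.affineIndependent ℝ) (hg _).hasFDerivAt hcrit hgrad
end

section
/- Let X be a real Hilbert space, let x ∈ X, and let {y^j_k : 1 ≤ j ≤ m, 1 ≤ k ≤ n} be a linearly independent family in X. Suppose that for each j = 1, …, m, T_j : X → ℝ is the continuous linear functional T_j(v) = ⟨∑_{k=1}^n β^j_k (x − y^j_k), v⟩ for some real numbers β^j_k not all zero (for that j). If the linear map X → ℝ^m given by v ↦ (T₁(v), …, T_m(v)) is not surjective, then x belongs to the affine span of the points {y^j_k : 1 ≤ j ≤ m, 1 ≤ k ≤ n}. -/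
/-!
Suppose `x` is outside the affine span. A nontrivial relation `∑ w (x − y) = 0` among the
differences `x − yʲₖ` would contradict the affine independence of the `yʲₖ` if `∑ w = 0`, and
write `x` as an affine combination of them if `∑ w ≠ 0`. So these differences are linearly
independent, and then so are the vectors `∑ₖ βʲₖ (x − yʲₖ)`, which combine pairwise disjoint
blocks of them. The Gram matrix of these vectors is therefore invertible, and already on their
span the functionals `Tⱼ` take arbitrary prescribed values.
-/

open Metric Set
open scoped RealInnerProductSpace

theorem linearIndependent_vsub_of_notMem_affineSpan {k V P ι : Type*} [DivisionRing k]
    [AddCommGroup V] [Module k V] [AddTorsor V P] {p : ι → P} {x : P}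
    (hp : AffineIndependent k p) (hx : x ∉ affineSpan k (range p)) :
    LinearIndependent k fun i => x -ᵥ p i := by
  suffices h : LinearIndependent k fun i => p i -ᵥ x by
    simpa only [Pi.neg_def, neg_vsub_eq_vsub_rev] using h.neg
  refine linearIndependent_iff'.2 fun s w hw => ?_
  by_cases hsum : ∑ i ∈ s, w i = 0
  · refine hp s w hsum ?_
    rwa [s.weightedVSub_eq_weightedVSubOfPoint_of_sum_eq_zero w p hsum x,
      s.weightedVSubOfPoint_apply]
  · let w' : ι → k := (∑ i ∈ s, w i)⁻¹ • w
    have hw'_sum : ∑ i ∈ s, w' i = 1 := by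
      simp only [w', Pi.smul_apply, smul_eq_mul, ← Finset.mul_sum, inv_mul_cancel₀ hsum]
    have hw'_comb : s.affineCombination k p w' = x := by
      rw [s.affineCombination_eq_weightedVSubOfPoint_vadd_of_sum_eq_one w' p hw'_sum x,
        s.weightedVSubOfPoint_apply]
      simp only [w', Pi.smul_apply, smul_assoc, ← Finset.smul_sum, hw, smul_zero, zero_vadd]
    exact absurd (hw'_comb ▸ affineCombination_mem_affineSpan hw'_sum p) hx

theorem linearIndependent_sum_smul_sigma {R M ι : Type*} {κ : ι → Type*} [Ring R]
    [NoZeroDivisors R] [AddCommGroup M] [Module R M] [∀ j, Fintype (κ j)]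
    {v : (j : ι) → κ j → M} (hv : LinearIndependent R fun p : Σ j, κ j => v p.1 p.2)
    {b : (j : ι) → κ j → R} (hb : ∀ j, ∃ k, b j k ≠ 0) :
    LinearIndependent R fun j => ∑ k, b j k • v j k := by
  refine linearIndependent_iff'.2 fun s c hc j hj => ?_
  have hsigma : ∑ p ∈ s.sigma fun _ => Finset.univ, (c p.1 * b p.1 p.2) • v p.1 p.2 = 0 := by
    simpa only [Finset.sum_sigma, mul_smul, ← Finset.smul_sum] using hc
  obtain ⟨k, hk⟩ := hb j
  have hcb : c j * b j k = 0 :=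
    linearIndependent_iff'.1 hv _ _ hsigma ⟨j, k⟩ (by simpa using hj)
  exact (mul_eq_zero.1 hcb).resolve_right hk

open scoped ComplexOrder in
theorem surjective_inner_of_linearIndependent {𝕜 E ι : Type*} [RCLike 𝕜] [NormedAddCommGroup E]
    [InnerProductSpace 𝕜 E] [Finite ι] {z : ι → E} (hz : LinearIndependent 𝕜 z) :
    Function.Surjective fun (v : E) (j : ι) => inner 𝕜 (z j) v := by
  classical
  have := Fintype.ofFinite ι
  intro u
  obtain ⟨a, ha⟩ := Matrix.mulVec_surjective_iff_isUnit.2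
    (Matrix.posDef_gram_of_linearIndependent hz).isUnit u
  refine ⟨∑ i, a i • z i, ?_⟩
  simp only [← ha, funext_iff, Matrix.mulVec, dotProduct, Matrix.gram_apply, inner_sum,
    inner_smul_right, mul_comm, implies_true]

theorem not_surjective_implies_mem_affine_span_general {𝕜 X ι : Type*} {κ : ι → Type*} [RCLike 𝕜]
    [NormedAddCommGroup X] [InnerProductSpace 𝕜 X] [Finite ι] [∀ j, Fintype (κ j)]
    (x : X) (y : (j : ι) → κ j → X)
    (hy : AffineIndependent 𝕜 fun p : Σ j, κ j => y p.1 p.2)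
    (β : (j : ι) → κ j → 𝕜) (hβ : ∀ j, ∃ k, β j k ≠ 0)
    (hnotsurj : ¬ Function.Surjective
      fun (v : X) (j : ι) => inner 𝕜 (∑ k, β j k • (x - y j k)) v) :
    x ∈ affineSpan 𝕜 (range fun p : Σ j, κ j => y p.1 p.2) := by
  by_contra hx
  have hdiff : LinearIndependent 𝕜 fun p : Σ j, κ j => x - y p.1 p.2 :=
    linearIndependent_vsub_of_notMem_affineSpan hy hx
  have hcomb : LinearIndependent 𝕜 fun j => ∑ k, β j k • (x - y j k) :=
    linearIndependent_sum_smul_sigma hdiff hβ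
  exact hnotsurj (surjective_inner_of_linearIndependent hcomb)

/-- If each functional `Tⱼ(v) = ⟪∑ₖ βʲₖ (x − yʲₖ), v⟫` is a nontrivial combination of the
functionals `⟪x − yʲₖ, ·⟫`, with the whole family `(yʲₖ)` linearly independent, and the
map `v ↦ (T₁ v, …, Tₘ v)` is not surjective onto `ℝᵐ`, then `x` lies in the affine span
of the points `yʲₖ`. -/
theorem not_surjective_implies_mem_affine_span
    {X : Type*} [NormedAddCommGroup X] [InnerProductSpace ℝ X] [CompleteSpace X]
    (m n : ℕ) (x : X) (y : Fin m → Fin n → X)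
    (hy : LinearIndependent ℝ (fun p : Fin m × Fin n => y p.1 p.2))
    (β : Fin m → Fin n → ℝ) (hβ : ∀ j, ∃ k, β j k ≠ 0)
    (hnotsurj : ¬ Function.Surjective
      (fun v : X => (fun j : Fin m => ⟪∑ k, β j k • (x - y j k), v⟫) : X → Fin m → ℝ)) :
    x ∈ affineSpan ℝ (Set.range (fun p : Fin m × Fin n => y p.1 p.2)) := by
  let e := Equiv.sigmaEquivProd (Fin m) (Fin n)
  exact affineSpan_mono ℝ (range_comp_subset_range e _) <|
    not_surjective_implies_mem_affine_span_general x y (hy.comp e e.injective).affineIndependent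
      β hβ hnotsurj
end

section
/- Let X be a real normed space, let (y_n) be points of X and (r_n) positive numbers with X = ⋃_{n=1}^∞ B(y_n, r_n), and let (λ_n)_{n≥2} be a strictly increasing sequence with 1/2 < λ_n < 1 for all n and lim_{n→∞} λ_n = 1. Define B₁ = B(y₁, r₁) and, for n ≥ 2, B_n = B(y_n, r_n) \ ⋃_{j=1}^{n−1} closedBall(y_j, λ_n r_j). Then the family (B_n)_{n∈ℕ} is an open cover of X which is locally finite: every point of X has a neighborhood meeting only finitely many of the sets B_n. -/
/-!
A point `x` lies in `Bₙ` for the least `n` with `x ∈ B(yₙ, rₙ)`, because the balls removed from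
`B(yₙ, rₙ)` are contained in the earlier balls of the cover, which miss `x`. For local finiteness,
let `x ∈ B(yₘ, rₘ)` and choose `t` with `dist x yₘ < t < rₘ`. Since `λₙ rₘ → rₘ`, the neighbourhood
`B(yₘ, t)` of `x` is contained in `closedBall(yₘ, λₙ rₘ)`, hence disjoint from `Bₙ`, for all large
`n`.
-/

open Metric Set

open Filter Topology

section Scalloped

variable {ι X : Type*}

/-- The set `U n` scalloped by the sets `C n j` with `j < n`. The removed sets depend on `n` as well
as on `j`, so that they may grow with `n` and exhaust `U j`; for `C n j = U j` this is
`disjointed U`. -/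
def scalloped [Preorder ι] (U : ι → Set X) (C : ι → ι → Set X) (n : ι) : Set X :=
  U n \ ⋃ j < n, C n j

variable {U : ι → Set X} {C : ι → ι → Set X}

theorem scalloped_of_isMin [Preorder ι] {n : ι} (hn : IsMin n) : scalloped U C n = U n := by
  simp only [scalloped, hn.not_lt, iUnion_of_empty, iUnion_empty, sdiff_empty]

theorem disjoint_scalloped [Preorder ι] {j n : ι} (hjn : j < n) :
    Disjoint (scalloped U C n) (C n j) :=
  disjoint_sdiff_left.mono_right (subset_biUnion_of_mem (u := C n) hjn)

theorem iUnion_scalloped [Preorder ι] [WellFoundedLT ι] (hCU : ∀ n, ∀ j < n, C n j ⊆ U j) :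
    ⋃ n, scalloped U C n = ⋃ n, U n := by
  refine (iUnion_mono fun n => sdiff_subset).antisymm fun x hx => ?_
  obtain ⟨n, hxn, hmin⟩ := exists_minimal_of_wellFoundedLT (fun n => x ∈ U n) (mem_iUnion.1 hx)
  refine mem_iUnion.2 ⟨n, hxn, fun hxC => ?_⟩
  obtain ⟨j, hjn, hxj⟩ := mem_iUnion₂.1 hxC
  exact hjn.not_ge (hmin (hCU n j hjn hxj) hjn.le)

variable [TopologicalSpace X]

theorem isOpen_scalloped [Preorder ι] [LocallyFiniteOrderBot ι] {n : ι} (hU : IsOpen (U n))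
    (hC : ∀ j < n, IsClosed (C n j)) : IsOpen (scalloped U C n) :=
  hU.sdiff ((finite_Iio n).isClosed_biUnion hC)

theorem locallyFinite_scalloped [LinearOrder ι] [LocallyFiniteOrderBot ι]
    (h : ∀ x, ∃ m, ∃ V ∈ 𝓝 x, ∀ᶠ n in cofinite, V ⊆ C n m) :
    LocallyFinite (scalloped U C) := by
  intro x
  obtain ⟨m, V, hV, hVC⟩ := h x
  have hlt : ∀ᶠ n in cofinite, m < n :=
    (finite_Iic m).eventually_cofinite_notMem.mono fun n => not_le.1
  have hdisj : ∀ᶠ n in cofinite, Disjoint (scalloped U C n) V := by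
    filter_upwards [hlt, hVC] with n hmn hVn
    exact (disjoint_scalloped hmn).mono_right hVn
  exact ⟨V, hV, by simpa only [eventually_cofinite, not_disjoint_iff_nonempty_inter] using hdisj⟩

end Scalloped

theorem exists_mem_nhds_eventually_subset_closedBall {ι X : Type*} [PseudoMetricSpace X]
    {x c : X} {R : ℝ} (hx : x ∈ ball c R) {l : Filter ι} {ρ : ι → ℝ} (hρ : Tendsto ρ l (𝓝 R)) :
    ∃ V ∈ 𝓝 x, ∀ᶠ n in l, V ⊆ closedBall c (ρ n) := by
  obtain ⟨t, hxt, htR⟩ := exists_between (mem_ball.1 hx)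
  refine ⟨ball c t, isOpen_ball.mem_nhds hxt, ?_⟩
  filter_upwards [hρ.eventually_const_lt htR] with n htn
  exact ball_subset_closedBall.trans (closedBall_subset_closedBall htn.le)

theorem scalloped_balls_form_locally_finite_open_cover_general
    {X : Type*} [PseudoMetricSpace X] (y : ℕ → X) (r : ℕ → ℝ)
    (hcov : ⋃ n, ball (y n) (r n) = univ)
    (ρ : ℕ → ℕ → ℝ) (hρ : ∀ n, ∀ j < n, ρ n j < r j)
    (hlim : ∀ j, Tendsto (fun n => ρ n j) atTop (𝓝 (r j)))
    (B : ℕ → Set X)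
    (hB0 : B 0 = ball (y 0) (r 0))
    (hBn : ∀ n, 0 < n → B n = ball (y n) (r n) \ ⋃ j < n, closedBall (y j) (ρ n j)) :
    (∀ n, IsOpen (B n)) ∧ (⋃ n, B n = univ) ∧ LocallyFinite B := by
  obtain rfl : B = scalloped (fun j => ball (y j) (r j)) fun n j => closedBall (y j) (ρ n j) := by
    funext n
    rcases n.eq_zero_or_pos with rfl | hn
    · rw [hB0, scalloped_of_isMin (isMin_iff_forall_not_lt.2 Nat.not_lt_zero)]
    · exact hBn n hn
  have hsub : ∀ n, ∀ j < n, closedBall (y j) (ρ n j) ⊆ ball (y j) (r j) := fun n j hjn =>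
    closedBall_subset_ball (hρ n j hjn)
  refine ⟨fun n => isOpen_scalloped isOpen_ball fun j _ => isClosed_closedBall, ?_, ?_⟩
  · rwa [iUnion_scalloped hsub]
  · refine locallyFinite_scalloped fun x => ?_
    obtain ⟨m, hxm⟩ := mem_iUnion.1 (hcov ▸ mem_univ x)
    rw [Nat.cofinite_eq_atTop]
    exact ⟨m, exists_mem_nhds_eventually_subset_closedBall hxm (hlim m)⟩

/-- The scalloped balls `Bₙ = B(yₙ, rₙ) \ ⋃_{j<n} closedBall(yⱼ, λₙ rⱼ)` built from a
covering family of balls and a strictly increasing sequence `λₙ ∈ (1/2, 1)` tending to `1`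
form a locally finite open cover of the space. -/
theorem scalloped_balls_form_locally_finite_open_cover
    {X : Type*} [NormedAddCommGroup X] [NormedSpace ℝ X]
    (y : ℕ → X) (r : ℕ → ℝ) (hr : ∀ n, 0 < r n)
    (hcov : ⋃ n, ball (y n) (r n) = univ)
    (lam : ℕ → ℝ) (hmono : StrictMono lam)
    (hlam : ∀ n, 1 / 2 < lam n ∧ lam n < 1)
    (hlim : Filter.Tendsto lam Filter.atTop (nhds 1))
    (B : ℕ → Set X)
    (hB0 : B 0 = ball (y 0) (r 0))
    (hBn : ∀ n, 0 < n →
      B n = ball (y n) (r n) \ ⋃ j < n, closedBall (y j) (lam n * r j)) :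
    (∀ n, IsOpen (B n)) ∧ (⋃ n, B n = univ) ∧ LocallyFinite B :=
  scalloped_balls_form_locally_finite_open_cover_general y r hcov (fun n j => lam n * r j)
    (fun n j _ => mul_lt_of_lt_one_left (hr j) (hlam n).2)
    (fun j => by simpa only [one_mul] using hlim.mul_const (r j)) B hB0 hBn
end
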